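/- arXiv:1607.06189 — 3 statements merged into one kernel-verified Lean document; each statement's English description precedes it below -/
import Mathlib

section
/- Let (R, m, k) be a Gorenstein local ring (a Noetherian local ring of finite injective dimension as a module over itself) with an isolated singularity. If Ex(CM(R)) = AR(CM(R)), then R is of finite CM type, i.e., there are only finitely many isomorphism classes of indecomposable Cohen–Macaulay R-modules. -/
/-!
Common definitions: Cohen-Macaulay modules, isolated singularities, stable Hom,
syzygies, transposes, Auslander-Reiten sequences, and the Grothendieck-type groups
`G(CM(R))`, `Ex(CM(R))`, `AR(CM(R))` from the paper
"Syzygies of Cohen-Macaulay modules and Grothendieck groups".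

Throughout, the maximal ideal of a local ring is realized as the Jacobson radical
`(⊥ : Ideal R).jacobson` (for a local ring these coincide), which lets the definitions
make sense without a `IsLocalRing` instance argument.
-/

namespace Paper

/-- A regular local ring: a Noetherian local ring whose maximal ideal (= Jacobson radical
of `⊥`) can be generated by `dim A` elements. -/
def IsRegularLocalRing (A : Type) [CommRing A] : Prop :=
  IsNoetherianRing A ∧ IsLocalRing A ∧
    ∃ s : Finset A, Ideal.span (s : Set A) = (⊥ : Ideal A).jacobson ∧
      (s.card : WithBot ℕ∞) = ringKrullDim A

/-- `M` is a (maximal) Cohen-Macaulay `R`-module: it is finitely generated, and it is either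
zero or satisfies `depth M = dim R`, the latter being expressed by the existence of a weakly
`M`-regular sequence of length `dim R` consisting of elements of the maximal ideal
(equivalently, since `depth M ≤ dim R` always holds for nonzero finitely generated `M` over a
Noetherian local ring `R`). -/
def IsMCM (R : Type) [CommRing R] (M : Type) [AddCommGroup M] [Module R M] : Prop :=
  Module.Finite R M ∧ (Subsingleton M ∨
    ∃ rs : List R, (∀ x ∈ rs, x ∈ (⊥ : Ideal R).jacobson) ∧
      RingTheory.Sequence.IsWeaklyRegular M rs ∧
      (rs.length : WithBot ℕ∞) = ringKrullDim R)

/-- The local ring `R` has an isolated singularity: `R_p` is regular local for every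
prime `p` different from the maximal ideal. -/
def IsolatedSingularity (R : Type) [CommRing R] : Prop :=
  ∀ (p : Ideal R) (_ : p.IsPrime), p ≠ (⊥ : Ideal R).jacobson →
    IsRegularLocalRing (Localization p.primeCompl)

section StableHom

variable (R : Type) [CommRing R]

/-- The submodule of `Hom_R(M,N)` consisting of homomorphisms factoring through a
finitely generated free module. -/
def stSub (M N : Type) [AddCommGroup M] [Module R M] [AddCommGroup N] [Module R N] :
    Submodule R (M →ₗ[R] N) :=
  Submodule.span R {f | ∃ (n : ℕ) (g : M →ₗ[R] (Fin n → R)) (h : (Fin n → R) →ₗ[R] N),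
    f = h ∘ₗ g}

/-- The stable Hom module `stHom_R(M,N) = Hom_R(M,N)/{maps factoring through f.g. frees}`. -/
abbrev StHom (M N : Type) [AddCommGroup M] [Module R M] [AddCommGroup N] [Module R N] :=
  (M →ₗ[R] N) ⧸ stSub R M N

/-- The map `stHom_R(M,N) → stHom_R(M,N')` induced by postcomposition with `φ : N →ₗ[R] N'`. -/
def stMapLeft {M N N' : Type} [AddCommGroup M] [Module R M] [AddCommGroup N] [Module R N]
    [AddCommGroup N'] [Module R N'] (φ : N →ₗ[R] N') : StHom R M N →ₗ[R] StHom R M N' :=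
  Submodule.mapQ _ _ (LinearMap.llcomp R M N N' φ) (by
    rw [stSub, Submodule.span_le]
    rintro f ⟨n, g, h, rfl⟩
    exact Submodule.subset_span ⟨n, g, φ ∘ₗ h, rfl⟩)

/-- The map `stHom_R(M,N) → stHom_R(M',N)` induced by precomposition with `φ : M' →ₗ[R] M`. -/
def stMapRight {M M' N : Type} [AddCommGroup M] [Module R M] [AddCommGroup M'] [Module R M']
    [AddCommGroup N] [Module R N] (φ : M' →ₗ[R] M) : StHom R M N →ₗ[R] StHom R M' N :=
  Submodule.mapQ _ _ (LinearMap.lcomp R N φ) (by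
    rw [stSub, Submodule.span_le]
    rintro f ⟨n, g, h, rfl⟩
    exact Submodule.subset_span ⟨n, g ∘ₗ φ, h, rfl⟩)

end StableHom

section Syzygies

variable (R : Type) [CommRing R]

/-- `S` is (isomorphic to) a first syzygy of `M`: the kernel of a minimal free cover
`π : R^n → M` (minimality: `ker π ⊆ m·R^n`). -/
def IsSyzygyOf (S M : Type) [AddCommGroup S] [Module R S] [AddCommGroup M] [Module R M] :
    Prop :=
  ∃ (n : ℕ) (π : (Fin n → R) →ₗ[R] M), Function.Surjective π ∧
    LinearMap.ker π ≤ (⊥ : Ideal R).jacobson • (⊤ : Submodule R (Fin n → R)) ∧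
    Nonempty (S ≃ₗ[R] LinearMap.ker π)

/-- `S` belongs to `ΩCM(R)`: it is a first syzygy of some Cohen-Macaulay module. -/
def MemOmegaCM (S : Type) [AddCommGroup S] [Module R S] : Prop :=
  ∃ N : ModuleCat.{0} R, IsMCM R N ∧ IsSyzygyOf R S N

/-- `M` has a nonzero free direct summand. -/
def HasFreeSummand (M : Type) [AddCommGroup M] [Module R M] : Prop :=
  ∃ P : ModuleCat.{0} R, Nonempty (M ≃ₗ[R] (P × R))

/-- `M'` is the non-free part of `M`: it has no nonzero free direct summand and
`M ≅ M' ⊕ R^a` for some `a ≥ 0`. -/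
def IsNonfreePart (M M' : Type) [AddCommGroup M] [Module R M] [AddCommGroup M'] [Module R M'] :
    Prop :=
  ¬ HasFreeSummand R M' ∧ ∃ a : ℕ, Nonempty (M ≃ₗ[R] (M' × (Fin a → R)))

/-- `M` is an indecomposable module: nonzero, and in any decomposition `M ≅ P × Q`
one factor vanishes. -/
def Indecomp (M : Type) [AddCommGroup M] [Module R M] : Prop :=
  ¬ Subsingleton M ∧ ∀ (P Q : ModuleCat.{0} R), Nonempty (M ≃ₗ[R] (P × Q)) →
    Subsingleton P ∨ Subsingleton Q

/-- `A` is a direct summand of `B`. -/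
def IsSummandOf (A B : Type) [AddCommGroup A] [Module R A] [AddCommGroup B] [Module R B] :
    Prop :=
  ∃ C : ModuleCat.{0} R, Nonempty (B ≃ₗ[R] (A × C))

/-- A linear map is a split epimorphism if it has a right inverse. -/
def IsSplitEpi {M N : Type} [AddCommGroup M] [Module R M] [AddCommGroup N] [Module R N]
    (g : M →ₗ[R] N) : Prop :=
  ∃ s : N →ₗ[R] M, g ∘ₗ s = LinearMap.id

/-- `0 → A → B → C → 0` (given by `f`, `g`) is an Auslander-Reiten sequence: a non-split
short exact sequence of finitely generated modules with `A`, `C` indecomposable non-free,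
such that every non-split-epi map `X → C` from a finitely generated module factors
through `g : B → C`. -/
def IsARSequence {A B C : Type} [AddCommGroup A] [Module R A] [AddCommGroup B] [Module R B]
    [AddCommGroup C] [Module R C] (f : A →ₗ[R] B) (g : B →ₗ[R] C) : Prop :=
  Module.Finite R A ∧ Module.Finite R B ∧ Module.Finite R C ∧
  Function.Injective f ∧ Function.Surjective g ∧ Function.Exact f g ∧
  ¬ IsSplitEpi R g ∧
  Indecomp R A ∧ ¬ Module.Free R A ∧ Indecomp R C ∧ ¬ Module.Free R C ∧
  ∀ (X : ModuleCat.{0} R) (h : (X : Type) →ₗ[R] C), Module.Finite R X → ¬ IsSplitEpi R h →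
    ∃ l : (X : Type) →ₗ[R] B, g ∘ₗ l = h

/-- `R` is of finite CM type: finitely many isomorphism classes of indecomposable
Cohen-Macaulay modules. -/
def FiniteCMType : Prop :=
  ∃ L : List (ModuleCat.{0} R), ∀ U : ModuleCat.{0} R, IsMCM R U → Indecomp R U →
    ∃ V ∈ L, Nonempty ((U : Type) ≃ₗ[R] (V : Type))

/-- `R` is of finite ΩCM type: finitely many isomorphism classes of indecomposable
modules in `ΩCM(R)`. -/
def FiniteOmegaCMType : Prop :=
  ∃ L : List (ModuleCat.{0} R), ∀ U : ModuleCat.{0} R, Module.Finite R U → Indecomp R U →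
    MemOmegaCM R U → ∃ V ∈ L, Nonempty ((U : Type) ≃ₗ[R] (V : Type))

/-- There are only finitely many isomorphism classes of indecomposable direct summands of
first syzygies of Cohen-Macaulay `R`-modules. -/
def FiniteSyzygySummandType : Prop :=
  ∃ L : List (ModuleCat.{0} R), ∀ U : ModuleCat.{0} R, Module.Finite R U → Indecomp R U →
    (∃ S : ModuleCat.{0} R, MemOmegaCM R S ∧ IsSummandOf R (U : Type) S) →
    ∃ V ∈ L, Nonempty ((U : Type) ≃ₗ[R] (V : Type))

end Syzygies

section Grothendieck

variable (R : Type) [CommRing R]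

/-- The Cohen-Macaulay `R`-modules, as objects of `ModuleCat R`. -/
def CMMod := {M : ModuleCat.{0} R // IsMCM R M}

/-- The relations `[X] + [Z] - [Y]` with `Y ≅ X ⊕ Z`, defining `G(CM(R))` as a quotient
of the free abelian group on the Cohen-Macaulay modules. -/
def GRel : AddSubgroup (FreeAbelianGroup (CMMod R)) :=
  AddSubgroup.closure {a | ∃ X Z Y : CMMod R,
    Nonempty ((Y.1 : Type) ≃ₗ[R] ((X.1 : Type) × (Z.1 : Type))) ∧
    a = FreeAbelianGroup.of X + FreeAbelianGroup.of Z - FreeAbelianGroup.of Y}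

/-- The group `G(CM(R))`: the free abelian group on the isomorphism classes of
Cohen-Macaulay `R`-modules (realized as the free abelian group on all Cohen-Macaulay
modules modulo the direct sum relations). -/
abbrev GCM := FreeAbelianGroup (CMMod R) ⧸ GRel R

/-- The class of an element of the free abelian group in `G(CM(R))`. -/
def gcls : FreeAbelianGroup (CMMod R) →+ GCM R := QuotientAddGroup.mk' _

/-- The subgroup `Ex(CM(R))` of `G(CM(R))` generated by `[X]+[Z]-[Y]` coming from short
exact sequences `0 → Z → Y → X → 0` of Cohen-Macaulay modules. -/
def ExCM : AddSubgroup (GCM R) :=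
  AddSubgroup.closure {x | ∃ (X Z Y : CMMod R) (f : (Z.1 : Type) →ₗ[R] (Y.1 : Type))
    (g : (Y.1 : Type) →ₗ[R] (X.1 : Type)), Function.Injective f ∧ Function.Surjective g ∧
    Function.Exact f g ∧
    x = gcls R (FreeAbelianGroup.of X + FreeAbelianGroup.of Z - FreeAbelianGroup.of Y)}

/-- The subgroup `AR(CM(R))` of `G(CM(R))` generated by `[X]+[Z]-[Y]` coming from
Auslander-Reiten sequences `0 → Z → Y → X → 0` of Cohen-Macaulay modules. -/
def ARCM : AddSubgroup (GCM R) :=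
  AddSubgroup.closure {x | ∃ (X Z Y : CMMod R) (f : (Z.1 : Type) →ₗ[R] (Y.1 : Type))
    (g : (Y.1 : Type) →ₗ[R] (X.1 : Type)), IsARSequence R f g ∧
    x = gcls R (FreeAbelianGroup.of X + FreeAbelianGroup.of Z - FreeAbelianGroup.of Y)}

/-- The image of a subgroup `H ≤ G(CM(R))` in `G(CM(R)) ⊗_ℤ ℚ`: the `ℚ`-subspace spanned by
the image of `H`. The equality `ratSpan R (ExCM R) = ratSpan R (ARCM R)` expresses
`Ex(CM(R)) ⊗_ℤ ℚ = AR(CM(R)) ⊗_ℤ ℚ` inside `G(CM(R)) ⊗_ℤ ℚ`. -/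
def ratSpan (H : AddSubgroup (GCM R)) : Submodule ℚ (TensorProduct ℤ ℚ (GCM R)) :=
  Submodule.span ℚ {x | ∃ g ∈ H, x = (1 : ℚ) ⊗ₜ[ℤ] g}

end Grothendieck

section Transpose

variable (R : Type) [CommRing R]

/-- The data of a minimal free presentation `R^{n1} --d--> R^{n0} --p--> M → 0`. -/
structure PresData (M : Type) [AddCommGroup M] [Module R M] where
  n1 : ℕ
  n0 : ℕ
  d : (Fin n1 → R) →ₗ[R] (Fin n0 → R)
  p : (Fin n0 → R) →ₗ[R] M
  surj : Function.Surjective p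
  exact : LinearMap.range d = LinearMap.ker p
  min0 : LinearMap.ker p ≤ (⊥ : Ideal R).jacobson • (⊤ : Submodule R (Fin n0 → R))
  min1 : LinearMap.ker d ≤ (⊥ : Ideal R).jacobson • (⊤ : Submodule R (Fin n1 → R))

/-- The (Auslander) transpose determined by a minimal free presentation: the cokernel of
the dual map `(R^{n0})^* → (R^{n1})^*`. -/
abbrev TrOf {M : Type} [AddCommGroup M] [Module R M] (D : PresData R M) : Type :=
  Module.Dual R (Fin D.n1 → R) ⧸ LinearMap.range D.d.dualMap

/-- The data of a minimal free cover `p : R^n → M`. -/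
structure SyzData (M : Type) [AddCommGroup M] [Module R M] where
  n : ℕ
  p : (Fin n → R) →ₗ[R] M
  surj : Function.Surjective p
  min : LinearMap.ker p ≤ (⊥ : Ideal R).jacobson • (⊤ : Submodule R (Fin n → R))

/-- The first syzygy determined by a minimal free cover. -/
abbrev SyzOf {M : Type} [AddCommGroup M] [Module R M] (D : SyzData R M) : Type :=
  LinearMap.ker D.p

/-- The data needed to construct `Ω⁻¹ M = Tr Ω Tr M`. -/
structure CosyzData (M : Type) [AddCommGroup M] [Module R M] where
  P : PresData R M
  S : SyzData R (TrOf R P)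
  Q : PresData R (SyzOf R S)

/-- The cosyzygy `Ω⁻¹ M = Tr Ω Tr M` determined by the data `D`. -/
abbrev CosyzOf {M : Type} [AddCommGroup M] [Module R M] (D : CosyzData R M) : Type :=
  TrOf R D.Q

/-- The map `t : Tr M → Tr M'` represents the transpose `Tr φ` of `φ : M' → M`
(with respect to the chosen minimal presentations). -/
def RepresentsTr {M M' : Type} [AddCommGroup M] [Module R M] [AddCommGroup M'] [Module R M']
    (D : PresData R M) (D' : PresData R M') (φ : M' →ₗ[R] M)
    (t : TrOf R D →ₗ[R] TrOf R D') : Prop :=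
  ∃ (φ0 : (Fin D'.n0 → R) →ₗ[R] (Fin D.n0 → R)) (φ1 : (Fin D'.n1 → R) →ₗ[R] (Fin D.n1 → R)),
    D.p ∘ₗ φ0 = φ ∘ₗ D'.p ∧ D.d ∘ₗ φ1 = φ0 ∘ₗ D'.d ∧
    t ∘ₗ (LinearMap.range D.d.dualMap).mkQ = (LinearMap.range D'.d.dualMap).mkQ ∘ₗ φ1.dualMap

/-- The map `v : Ω Y → Ω Y'` represents the syzygy `Ω ψ` of `ψ : Y → Y'`
(with respect to the chosen minimal covers). -/
def RepresentsOmega {Y Y' : Type} [AddCommGroup Y] [Module R Y] [AddCommGroup Y'] [Module R Y']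
    (D : SyzData R Y) (D' : SyzData R Y') (ψ : Y →ₗ[R] Y')
    (v : SyzOf R D →ₗ[R] SyzOf R D') : Prop :=
  ∃ h : (Fin D.n → R) →ₗ[R] (Fin D'.n → R), D'.p ∘ₗ h = ψ ∘ₗ D.p ∧
    (LinearMap.ker D'.p).subtype ∘ₗ v = h ∘ₗ (LinearMap.ker D.p).subtype

/-- The map `w : Ω⁻¹ X' → Ω⁻¹ X` represents `Ω⁻¹ φ = Tr Ω Tr φ` for `φ : X' → X`. -/
def RepresentsOmegaInv {X X' : Type} [AddCommGroup X] [Module R X] [AddCommGroup X']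
    [Module R X'] (C : CosyzData R X) (C' : CosyzData R X') (φ : X' →ₗ[R] X)
    (w : CosyzOf R C' →ₗ[R] CosyzOf R C) : Prop :=
  ∃ (t : TrOf R C.P →ₗ[R] TrOf R C'.P) (v : SyzOf R C.S →ₗ[R] SyzOf R C'.S),
    RepresentsTr R C.P C'.P φ t ∧ RepresentsOmega R C.S C'.S t v ∧
    RepresentsTr R C'.Q C.Q v w

end Transpose

/-- `M` has injective dimension at most `n` as an `R`-module. -/
def InjDimLE (R : Type) [CommRing R] : ℕ → ModuleCat.{0} R → Prop
  | 0, M => Module.Injective R M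
  | n+1, M => ∃ (I : ModuleCat.{0} R) (f : (M : Type) →ₗ[R] (I : Type)),
      Module.Injective R I ∧ Function.Injective f ∧
      InjDimLE R n (ModuleCat.of R ((I : Type) ⧸ LinearMap.range f))

/-- A Gorenstein local ring: a Noetherian local ring of finite injective dimension as a
module over itself. -/
def IsGorensteinLocal (R : Type) [CommRing R] : Prop :=
  IsNoetherianRing R ∧ IsLocalRing R ∧ ∃ n : ℕ, InjDimLE R n (ModuleCat.of R R)

/-- The length of an `R`-module, expressed as the Krull dimension of its lattice of
submodules. -/
noncomputable def modLength (R M : Type) [CommRing R] [AddCommGroup M] [Module R M] :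
    WithBot ℕ∞ :=
  Order.krullDim (Submodule R M)

section Part1
open CategoryTheory Abelian IsLocalRing

section ExtBasics
variable {R : Type} [CommRing R]

/-- Vanishing of an Ext module. -/
abbrev EZ (R : Type) [CommRing R] (M N : Type) [AddCommGroup M] [Module R M] [AddCommGroup N]
    [Module R N] (j : ℕ) : Prop :=
  Subsingleton (Ext (ModuleCat.of R M) (ModuleCat.of R N) j)

variable {A B C M N : Type} [AddCommGroup A] [Module R A] [AddCommGroup B] [Module R B]
  [AddCommGroup C] [Module R C] [AddCommGroup M] [Module R M] [AddCommGroup N] [Module R N]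

/-- The short complex attached to an exact pair. -/
abbrev sc (f : A →ₗ[R] B) (g : B →ₗ[R] C) (h : Function.Exact f g) :
    ShortComplex (ModuleCat.{0} R) :=
  ModuleCat.shortComplexOfCompEqZero f g h.linearMap_comp_eq_zero

lemma sc_shortExact {f : A →ₗ[R] B} {g : B →ₗ[R] C} (h : Function.Exact f g)
    (hf : Function.Injective f) (hg : Function.Surjective g) : (sc f g h).ShortExact where
  exact := ModuleCat.shortComplex_exact _ h
  mono_f := (ModuleCat.mono_iff_injective _).mpr hf
  epi_g := (ModuleCat.epi_iff_surjective _).mpr hg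

lemma EZ.contra_mid {f : A →ₗ[R] B} {g : B →ₗ[R] C} (h : Function.Exact f g)
    (hf : Function.Injective f) (hg : Function.Surjective g) {j : ℕ}
    (h1 : EZ R A N j) (h3 : EZ R C N j) : EZ R B N j := by
  refine subsingleton_of_forall_eq 0 fun x => ?_
  obtain ⟨y, rfl⟩ := Ext.contravariant_sequence_exact₂ (sc_shortExact h hf hg) (ModuleCat.of R N) x
    (Subsingleton.elim (α := Ext (ModuleCat.of R A) (ModuleCat.of R N) j) _ _)
  rw [Subsingleton.elim (α := Ext (ModuleCat.of R C) (ModuleCat.of R N) j) y 0]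
  simp

lemma EZ.contra_left {f : A →ₗ[R] B} {g : B →ₗ[R] C} (h : Function.Exact f g)
    (hf : Function.Injective f) (hg : Function.Surjective g) {j : ℕ}
    (h2 : EZ R B N j) (h3 : EZ R C N (j+1)) : EZ R A N j := by
  refine subsingleton_of_forall_eq 0 fun x => ?_
  obtain ⟨y, rfl⟩ := Ext.contravariant_sequence_exact₁ (sc_shortExact h hf hg) (ModuleCat.of R N) x
    (add_comm 1 j)
    (Subsingleton.elim (α := Ext (ModuleCat.of R C) (ModuleCat.of R N) (j+1)) _ _)
  rw [Subsingleton.elim (α := Ext (ModuleCat.of R B) (ModuleCat.of R N) j) y 0]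
  simp

lemma EZ.contra_right {f : A →ₗ[R] B} {g : B →ₗ[R] C} (h : Function.Exact f g)
    (hf : Function.Injective f) (hg : Function.Surjective g) {j : ℕ}
    (h1 : EZ R A N j) (h2 : EZ R B N (j+1)) : EZ R C N (j+1) := by
  refine subsingleton_of_forall_eq 0 fun x => ?_
  obtain ⟨y, rfl⟩ := Ext.contravariant_sequence_exact₃ (sc_shortExact h hf hg) (ModuleCat.of R N) x
    (Subsingleton.elim (α := Ext (ModuleCat.of R B) (ModuleCat.of R N) (j+1)) _ _)
    (add_comm 1 j)
  rw [Subsingleton.elim (α := Ext (ModuleCat.of R A) (ModuleCat.of R N) j) y 0]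
  simp

lemma EZ.co_right {f : A →ₗ[R] B} {g : B →ₗ[R] C} (h : Function.Exact f g)
    (hf : Function.Injective f) (hg : Function.Surjective g) {j : ℕ}
    (h2 : EZ R M B j) (h1 : EZ R M A (j+1)) : EZ R M C j := by
  refine subsingleton_of_forall_eq 0 fun x => ?_
  obtain ⟨y, rfl⟩ := Ext.covariant_sequence_exact₃ (ModuleCat.of R M) (sc_shortExact h hf hg) x
    rfl
    (Subsingleton.elim (α := Ext (ModuleCat.of R M) (ModuleCat.of R A) (j+1)) _ _)
  rw [Subsingleton.elim (α := Ext (ModuleCat.of R M) (ModuleCat.of R B) j) y 0]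
  simp

lemma EZ.co_left {f : A →ₗ[R] B} {g : B →ₗ[R] C} (h : Function.Exact f g)
    (hf : Function.Injective f) (hg : Function.Surjective g) {j : ℕ}
    (h3 : EZ R M C j) (h2 : EZ R M B (j+1)) : EZ R M A (j+1) := by
  refine subsingleton_of_forall_eq 0 fun x => ?_
  obtain ⟨y, rfl⟩ := Ext.covariant_sequence_exact₁ (ModuleCat.of R M) (sc_shortExact h hf hg) x
    (Subsingleton.elim (α := Ext (ModuleCat.of R M) (ModuleCat.of R B) (j+1)) _ _) rfl
  rw [Subsingleton.elim (α := Ext (ModuleCat.of R M) (ModuleCat.of R C) j) y 0]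
  simp

lemma EZ.of_subsingleton_left [Subsingleton M] (j : ℕ) : EZ R M N j := by
  refine subsingleton_of_forall_eq 0 fun x => ?_
  have : 𝟙 (ModuleCat.of R M) = 0 := by ext y; exact Subsingleton.elim (α := M) _ _
  rw [← Ext.mk₀_id_comp x, this]; simp

lemma EZ.congr_left (e : A ≃ₗ[R] B) {j : ℕ} (h : EZ R A N j) : EZ R B N j :=
  EZ.contra_mid (f := e.toLinearMap) (g := (0 : B →ₗ[R] PUnit.{1}))
    (fun y => ⟨fun _ => ⟨e.symm y, by simp⟩, fun _ => rfl⟩)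
    e.injective (fun _ => ⟨0, rfl⟩) h (EZ.of_subsingleton_left j)

lemma EZ.congr_right (e : A ≃ₗ[R] B) {j : ℕ} (h : EZ R M A j) : EZ R M B j := by
  refine subsingleton_of_forall_eq 0 fun x => ?_
  have h1 : ModuleCat.ofHom e.symm.toLinearMap ≫ ModuleCat.ofHom e.toLinearMap
    = 𝟙 (ModuleCat.of R B) := by ext y; simp
  rw [← Ext.comp_mk₀_id x, ← h1, ← Ext.mk₀_comp_mk₀, ← Ext.comp_assoc_of_second_deg_zero,
    Subsingleton.elim (α := Ext (ModuleCat.of R M) (ModuleCat.of R A) j)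
      (x.comp (Ext.mk₀ (ModuleCat.ofHom e.symm.toLinearMap)) (add_zero j)) 0]
  simp

lemma EZ.of_projective [Module.Projective R M] (j : ℕ) : EZ R M N (j+1) :=
  subsingleton_of_forall_eq 0 fun x => by
    have : Projective (ModuleCat.of R M) :=
      (IsProjective.iff_projective M).mp inferInstance
    exact Ext.eq_zero_of_projective x

lemma EZ.of_injective (h : Module.Injective R N) (j : ℕ) : EZ R M N (j+1) :=
  subsingleton_of_forall_eq 0 fun x => by
    have : Injective (ModuleCat.of R N) :=
      (Module.injective_iff_injective_object R N).mp h
    exact Ext.eq_zero_of_injective x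

lemma EZ.zero_iff : EZ R M N 0 ↔ Subsingleton (M →ₗ[R] N) :=
  ((Ext.linearEquiv₀ (R := R)).trans ModuleCat.homLinearEquiv).toEquiv.subsingleton_congr

lemma EZ.pi {n j : ℕ} (h : EZ R M R j) : EZ R M (Fin n → R) j := by
  refine subsingleton_of_forall_eq 0 fun x => ?_
  have h1 : 𝟙 (ModuleCat.of R (Fin n → R)) =
    ∑ i, ModuleCat.ofHom (LinearMap.proj i) ≫
      ModuleCat.ofHom (LinearMap.single R (fun _ : Fin n => R) i) := by
    ext1
    rw [ModuleCat.hom_sum]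
    refine LinearMap.ext fun y => ?_
    simp only [ModuleCat.hom_comp, ModuleCat.hom_ofHom, ModuleCat.hom_id, LinearMap.sum_apply,
      LinearMap.comp_apply, LinearMap.id_apply]
    exact (Finset.univ_sum_single y).symm
  rw [← Ext.comp_mk₀_id x, h1, Ext.mk₀_sum, Ext.comp_sum]
  refine Finset.sum_eq_zero fun i _ => ?_
  rw [← Ext.mk₀_comp_mk₀, ← Ext.comp_assoc_of_second_deg_zero,
    Subsingleton.elim (α := Ext (ModuleCat.of R M) (ModuleCat.of R R) j)
    (x.comp (Ext.mk₀ (ModuleCat.ofHom (LinearMap.proj i))) (add_zero j)) 0]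
  simp

lemma EZ.nakayama [IsNoetherianRing R] [IsLocalRing R] [Module.Finite R M] [Module.Finite R N]
    {x : R} (hx : x ∈ maximalIdeal R) (reg : IsSMulRegular M x) {j : ℕ}
    (h : EZ R (QuotSMulTop x M) N (j+1)) : EZ R M N j := by
  have hS := IsSMulRegular.smulShortComplex_shortExact (M := ModuleCat.of R M) reg
  have key : (⊤ : Submodule R (Ext (ModuleCat.of R M) (ModuleCat.of R N) j)) ≤
      maximalIdeal R • ⊤ := by
    intro y _
    obtain ⟨z, hz⟩ := Ext.contravariant_sequence_exact₁ hS (ModuleCat.of R N) y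
      (add_comm 1 j)
      (Subsingleton.elim (α := Ext (ModuleCat.of R (QuotSMulTop x M)) (ModuleCat.of R N) (j+1)) _ _)
    rw [ModuleCat.smulShortComplex_f_eq_smul_id] at hz
    have hz' : (Ext.mk₀ (x • 𝟙 (ModuleCat.of R M))).comp
      (show Ext (ModuleCat.of R M) (ModuleCat.of R N) j from z) (zero_add j) = y := hz
    rw [Ext.mk₀_smul, Ext.smul_comp, Ext.mk₀_id_comp] at hz'
    rw [← hz']
    exact Submodule.smul_mem_smul hx trivial
  have := Submodule.eq_bot_of_le_smul_of_le_jacobson_bot (maximalIdeal R) ⊤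
    (Module.Finite.fg_top) key (IsLocalRing.maximalIdeal_le_jacobson _)
  exact (Submodule.subsingleton_iff R).mp (subsingleton_of_bot_eq_top this.symm)

end ExtBasics

end Part1

section Part2
open CategoryTheory Abelian IsLocalRing RingTheory.Sequence
open scoped Pointwise

section Bass
variable {R : Type} [CommRing R]

lemma exact_subtype_mkQ {M : Type} [AddCommGroup M] [Module R M] (S : Submodule R M) :
    Function.Exact S.subtype S.mkQ := by
  intro y; simp

lemma exact_lsmul_mkQ {M : Type} [AddCommGroup M] [Module R M] (x : R) :
    Function.Exact (LinearMap.lsmul R M x) (x • (⊤ : Submodule R M)).mkQ := by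
  intro y
  rw [Submodule.mkQ_apply, Submodule.Quotient.mk_eq_zero]
  constructor
  · intro h
    obtain ⟨z, -, hz⟩ := (Submodule.mem_smul_pointwise_iff_exists _ _ _).mp h
    exact ⟨z, hz⟩
  · rintro ⟨z, rfl⟩
    exact Submodule.smul_mem_pointwise_smul _ _ _ trivial

lemma bass_prime [IsNoetherianRing R] [IsLocalRing R] {N : Type} [AddCommGroup N] [Module R N]
    [Module.Finite R N] {n : ℕ} (h : ∀ j, n ≤ j → EZ R (R ⧸ maximalIdeal R) N j)
    (p : Ideal R) : p.IsPrime → ∀ j, n ≤ j → EZ R (R ⧸ p) N j := by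
  induction p using IsWellFounded.induction (fun a b : Ideal R => a > b) with
  | ind p ih =>
    intro hp j hj
    by_cases hpm : p = maximalIdeal R
    · subst hpm; exact h j hj
    obtain ⟨x, hxm, hxp⟩ : ∃ x ∈ maximalIdeal R, x ∉ p := by
      by_contra hcon
      push Not at hcon
      exact hpm (le_antisymm (le_maximalIdeal hp.ne_top) hcon)
    have reg : IsSMulRegular (R ⧸ p) x := by
      rw [isSMulRegular_iff_right_eq_zero_of_smul]
      intro y hy
      obtain ⟨y, rfl⟩ := Ideal.Quotient.mk_surjective y
      have : Ideal.Quotient.mk p (x * y) = 0 := by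
        simpa [Algebra.smul_def] using hy
      rw [Ideal.Quotient.eq_zero_iff_mem] at this ⊢
      exact (hp.mem_or_mem this).resolve_left hxp
    refine EZ.nakayama hxm reg ?_
    have gen : ∀ (L : Type) [AddCommGroup L] [Module R L] [Module.Finite R L],
        p ≤ Module.annihilator R L → x ∈ Module.annihilator R L → EZ R L N (j+1) := by
      intro L _ _ hL
      induction hL using IsNoetherianRing.induction_on_isQuotientEquivQuotientPrime R with
      | subsingleton L => exact fun _ _ => EZ.of_subsingleton_left _
      | quotient L q e =>
        intro h1 h2
        have hann : Module.annihilator R L = q.1 := by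
          rw [e.annihilator_eq, Ideal.annihilator_quotient]
        rw [hann] at h1 h2
        exact EZ.congr_left e.symm (ih q.1 (lt_of_le_of_ne h1 (fun hh => hxp (hh ▸ h2))) q.2 _
          (by omega))
      | exact N₁ N₂ N₃ f g hf hg hfg h1 h3 =>
        intro h4 h5
        have a1 := LinearMap.annihilator_le_of_injective f hf
        have a3 := LinearMap.annihilator_le_of_surjective g hg
        exact EZ.contra_mid hfg hf hg (h1 (h4.trans a1) (a1 h5)) (h3 (h4.trans a3) (a3 h5))
    apply gen
    · have a3 := LinearMap.annihilator_le_of_surjective _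
        (Submodule.mkQ_surjective (x • (⊤ : Submodule R (R ⧸ p))))
      rw [Ideal.annihilator_quotient] at a3
      exact a3
    · rw [Module.mem_annihilator]
      intro y
      obtain ⟨y, rfl⟩ := Submodule.mkQ_surjective _ y
      rw [← map_smul, Submodule.mkQ_apply, Submodule.Quotient.mk_eq_zero]
      exact Submodule.smul_mem_pointwise_smul _ _ _ trivial

lemma bass [IsNoetherianRing R] [IsLocalRing R] {N : Type} [AddCommGroup N] [Module R N]
    [Module.Finite R N] {n : ℕ} (h : ∀ j, n ≤ j → EZ R (R ⧸ maximalIdeal R) N j)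
    (L : Type) [AddCommGroup L] [Module R L] [hL : Module.Finite R L] (j : ℕ) (hj : n ≤ j) :
    EZ R L N j := by
  induction hL using IsNoetherianRing.induction_on_isQuotientEquivQuotientPrime R with
  | subsingleton L => exact EZ.of_subsingleton_left _
  | quotient L q e => exact EZ.congr_left e.symm (bass_prime h q.1 q.2 j hj)
  | exact N₁ N₂ N₃ f g hf hg hfg h1 h3 => exact EZ.contra_mid hfg hf hg h1 h3

lemma EZ.quotSMulTop {M N : Type} [AddCommGroup M] [Module R M] [AddCommGroup N] [Module R N]
    {x : R} (reg : IsSMulRegular M x) {j : ℕ} (h1 : EZ R M N j) (h2 : EZ R M N (j+1)) :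
    EZ R (QuotSMulTop x M) N (j+1) :=
  EZ.contra_right (exact_lsmul_mkQ x) reg (Submodule.mkQ_surjective _) h1 h2

lemma EZ.to_quotSMulTop {M N : Type} [AddCommGroup M] [Module R M] [AddCommGroup N] [Module R N]
    {x : R} (reg : IsSMulRegular N x) {j : ℕ} (h1 : EZ R M N j) (h2 : EZ R M N (j+1)) :
    EZ R M (QuotSMulTop x N) j :=
  EZ.co_right (exact_lsmul_mkQ x) reg (Submodule.mkQ_surjective _) h1 h2

lemma EZ.quot_list {N : Type} [AddCommGroup N] [Module R N] (rs : List R) :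
    ∀ {M : Type} [AddCommGroup M] [Module R M] {n : ℕ}, IsWeaklyRegular M rs →
    (∀ j, n < j → EZ R M N j) → ∀ j, n + rs.length < j →
    EZ R (M ⧸ (Ideal.ofList rs • (⊤ : Submodule R M))) N j := by
  induction rs with
  | nil =>
    intro M _ _ n _ h j hj
    exact EZ.congr_left (Submodule.quotEquivOfEqBot _ (by simp)).symm (h j (by simpa using hj))
  | cons r rs ih =>
    intro M _ _ n hr h j hj
    rw [isWeaklyRegular_cons_iff] at hr
    refine EZ.congr_left (Submodule.quotOfListConsSMulTopEquivQuotSMulTopInner M r rs).symm ?_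
    refine ih (n := n+1) hr.2 ?_ j (by simp at hj; omega)
    intro j hj
    obtain ⟨j, rfl⟩ : ∃ i, j = i + 1 := ⟨j-1, by omega⟩
    exact EZ.quotSMulTop hr.1 (h _ (by omega)) (h _ (by omega))

lemma EZ.to_quot_list {M : Type} [AddCommGroup M] [Module R M] (rs : List R) :
    ∀ {N : Type} [AddCommGroup N] [Module R N], IsWeaklyRegular N rs →
    (∀ j, EZ R M N j) → ∀ j,
    EZ R M (N ⧸ (Ideal.ofList rs • (⊤ : Submodule R N))) j := by
  induction rs with
  | nil =>
    intro N _ _ _ h j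
    exact EZ.congr_right (Submodule.quotEquivOfEqBot _ (by simp)).symm (h j)
  | cons r rs ih =>
    intro N _ _ hr h j
    rw [isWeaklyRegular_cons_iff] at hr
    refine EZ.congr_right (Submodule.quotOfListConsSMulTopEquivQuotSMulTopInner N r rs).symm ?_
    exact ih hr.2 (fun j => EZ.to_quotSMulTop hr.1 (h _) (h _)) j

lemma EZ.of_injDimLE (n : ℕ) : ∀ (N : ModuleCat.{0} R), InjDimLE R n N →
    ∀ (L : Type) [AddCommGroup L] [Module R L] (j : ℕ), n < j → EZ R L N j := by
  induction n with
  | zero =>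
    intro N h L _ _ j hj
    obtain ⟨j, rfl⟩ : ∃ i, j = i + 1 := ⟨j-1, by omega⟩
    exact EZ.of_injective h j
  | succ n ih =>
    rintro N ⟨I, f, hI, hf, hq⟩ L _ _ j hj
    obtain ⟨j, rfl⟩ : ∃ i, j = i + 1 := ⟨j-1, by omega⟩
    exact EZ.co_left (f := f) (g := (LinearMap.range f).mkQ) (by intro y; simp) hf
      (Submodule.mkQ_surjective _) (ih _ hq L j (by omega)) (EZ.of_injective hI j)

/-- lemma L6 -/
lemma EZ.depth [IsNoetherianRing R] [IsLocalRing R] {N : Type} [AddCommGroup N] [Module R N]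
    [Module.Finite R N] {t : ℕ}
    (h : ∀ (L : Type) [AddCommGroup L] [Module R L] [Module.Finite R L] (j : ℕ), t < j → EZ R L N j)
    (ys : List R) : (∀ y ∈ ys, y ∈ maximalIdeal R) →
    ∀ (U : Type) [AddCommGroup U] [Module R U] [Module.Finite R U], IsWeaklyRegular U ys →
    ∀ j, t < j + ys.length → EZ R U N j := by
  induction ys with
  | nil => intro _ U _ _ _ _ j hj; exact h U j (by simpa using hj)
  | cons y ys ih =>
    intro hm U _ _ _ hreg j hj
    rw [isWeaklyRegular_cons_iff] at hreg
    exact EZ.nakayama (hm y (by simp)) hreg.1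
      (ih (fun z hz => hm z (by simp [hz])) (QuotSMulTop y U) hreg.2 (j+1) (by simp at hj; omega))

end Bass

end Part2

section Part3
open CategoryTheory Abelian IsLocalRing RingTheory.Sequence
open scoped Pointwise

section Gor
variable {R : Type} [CommRing R] [IsNoetherianRing R] [IsLocalRing R]

lemma length_le_dim {rs : List R} (hm : ∀ x ∈ rs, x ∈ maximalIdeal R)
    (hr : IsWeaklyRegular R rs) : (rs.length : WithBot ℕ∞) ≤ ringKrullDim R := by
  have hr' : IsRegular R rs :=
    (IsLocalRing.isRegular_iff_isWeaklyRegular_of_subset_maximalIdeal hm).mpr hr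
  rw [← ringKrullDim_add_length_eq_ringKrullDim_of_isRegular rs hr']
  have : Nontrivial (R ⧸ Ideal.ofList rs) := by
    apply Ideal.Quotient.nontrivial_iff.mpr
    intro h
    have : Ideal.ofList rs ≤ maximalIdeal R := Ideal.span_le.mpr hm
    exact (maximalIdeal.isMaximal R).ne_top (top_le_iff.mp (h ▸ this))
  have h0 : (0 : WithBot ℕ∞) ≤ ringKrullDim (R ⧸ Ideal.ofList rs) := ringKrullDim_nonneg_of_nontrivial
  calc (rs.length : WithBot ℕ∞) = 0 + rs.length := (zero_add _).symm
    _ ≤ _ := by gcongr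

lemma exists_dim : ∃ d : ℕ, ringKrullDim R = d := by
  have h1 : ringKrullDim R ≠ ⊤ := ringKrullDim_ne_top
  have h2 : ringKrullDim R ≠ ⊥ := ringKrullDim_ne_bot
  obtain ⟨a, ha⟩ := WithBot.ne_bot_iff_exists.mp h2
  have : a ≠ ⊤ := by rintro rfl; exact h1 ha.symm
  obtain ⟨b, rfl⟩ := ENat.ne_top_iff_exists.mp this
  exact ⟨b, ha.symm⟩

lemma exists_max_regular : ∃ rs : List R, (∀ x ∈ rs, x ∈ maximalIdeal R) ∧ IsWeaklyRegular R rs ∧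
    ∀ x ∈ maximalIdeal R, ¬ IsSMulRegular (R ⧸ (Ideal.ofList rs • (⊤ : Submodule R R))) x := by
  obtain ⟨d, hd⟩ := exists_dim (R := R)
  by_contra hcon
  push Not at hcon
  have : ∀ n : ℕ, ∃ rs : List R, (∀ x ∈ rs, x ∈ maximalIdeal R) ∧ IsWeaklyRegular R rs ∧
      rs.length = n := by
    intro n
    induction n with
    | zero => exact ⟨[], by simp, IsWeaklyRegular.nil R R, rfl⟩
    | succ n ih =>
      obtain ⟨rs, h1, h2, h3⟩ := ih
      obtain ⟨x, hx, hreg⟩ := hcon rs h1 h2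
      refine ⟨rs ++ [x], ?_, ?_, by simp [h3]⟩
      · intro y hy
        rcases List.mem_append.mp hy with h | h
        · exact h1 y h
        · simp at h; exact h ▸ hx
      · rw [isWeaklyRegular_append_iff]
        refine ⟨h2, ?_⟩
        rw [isWeaklyRegular_cons_iff]
        exact ⟨hreg, IsWeaklyRegular.nil _ _⟩
  obtain ⟨rs, h1, h2, h3⟩ := this (d+1)
  have := length_le_dim h1 h2
  rw [hd, h3] at this
  have : d + 1 ≤ d := by exact_mod_cast this
  omega

lemma ann_residue : Module.annihilator R (R ⧸ maximalIdeal R) = maximalIdeal R :=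
  Ideal.annihilator_quotient

lemma exists_embed {N : Type} [AddCommGroup N] [Module R N] [Module.Finite R N]
    (h : ∀ x ∈ maximalIdeal R, ¬ IsSMulRegular N x) :
    ∃ f : (R ⧸ maximalIdeal R) →ₗ[R] N, Function.Injective f := by
  have h1 : ¬ Subsingleton ((R ⧸ maximalIdeal R) →ₗ[R] N) := by
    rw [IsSMulRegular.subsingleton_linearMap_iff]
    rintro ⟨r, hr, hreg⟩
    rw [ann_residue] at hr
    exact h r hr hreg
  rw [not_subsingleton_iff_nontrivial] at h1
  obtain ⟨f, hf⟩ := exists_ne (0 : (R ⧸ maximalIdeal R) →ₗ[R] N)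
  have : IsSimpleModule R (R ⧸ maximalIdeal R) :=
    isSimpleModule_iff_isCoatom.mpr (Ideal.isMaximal_def.mp (maximalIdeal.isMaximal R))
  exact ⟨f, LinearMap.injective_of_ne_zero hf⟩

lemma sharp_injdim {rs : List R} (hr : IsWeaklyRegular R rs)
    (hmax : ∀ x ∈ maximalIdeal R, ¬ IsSMulRegular (R ⧸ (Ideal.ofList rs • (⊤ : Submodule R R))) x)
    (n : ℕ) : (∀ (L : Type) [AddCommGroup L] [Module R L] [Module.Finite R L] (j : ℕ),
      rs.length + n < j → EZ R L R j) →
      ∀ (L : Type) [AddCommGroup L] [Module R L] [Module.Finite R L] (j : ℕ),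
      rs.length < j → EZ R L R j := by
  induction n with
  | zero => exact fun h => h
  | succ n ih =>
    intro h
    apply ih
    intro L _ _ _ j hj
    refine bass (n := rs.length + n + 1) ?_ L j hj
    intro j hj
    rcases eq_or_lt_of_le hj with rfl | hj
    · obtain ⟨f, hf⟩ := exists_embed hmax
      refine EZ.contra_left (f := f) (g := (LinearMap.range f).mkQ) (by intro y; simp) hf
        (Submodule.mkQ_surjective _) ?_ (h _ _ (by omega))
      refine EZ.quot_list (n := 0) rs hr ?_ _ (by omega)
      intro j hj
      obtain ⟨j, rfl⟩ : ∃ i, j = i + 1 := ⟨j-1, by omega⟩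
      exact EZ.of_projective j
    · exact h _ _ (by omega)

lemma jac_eq : (⊥ : Ideal R).jacobson = maximalIdeal R :=
  IsLocalRing.jacobson_eq_maximalIdeal _ bot_ne_top

theorem gor_main {n : ℕ} (hn : InjDimLE R n (ModuleCat.of R R))
    {U : Type} [AddCommGroup U] [Module R U] (hU : IsMCM R U) (hU0 : ¬ Subsingleton U) :
    IsMCM R R ∧
    ∀ (V : Type) [AddCommGroup V] [Module R V], IsMCM R V → ∀ j, EZ R V R (j+1) := by
  obtain ⟨rs, hm, hr, hmax⟩ := exists_max_regular (R := R)
  have hsharp := sharp_injdim hr hmax n (fun L _ _ _ j hj =>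
    EZ.of_injDimLE n _ hn L j (by omega))
  obtain ⟨d, hd⟩ := exists_dim (R := R)
  have htd : rs.length ≤ d := by
    have := length_le_dim hm hr
    rw [hd] at this
    exact_mod_cast this
  have hdt : d ≤ rs.length := by
    by_contra hlt
    obtain ⟨_, hU⟩ := hU
    obtain ⟨ys, hy1, hy2, hy3⟩ := hU.resolve_left hU0
    rw [jac_eq] at hy1
    have hyl : ys.length = d := by rw [hd] at hy3; exact_mod_cast hy3
    have h0 : ∀ j, EZ R U R j := fun j => EZ.depth hsharp ys hy1 U hy2 j (by omega)
    have h1 := EZ.to_quot_list rs hr h0 0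
    rw [EZ.zero_iff, IsSMulRegular.subsingleton_linearMap_iff] at h1
    obtain ⟨r, hra, hreg⟩ := h1
    refine hmax r ?_ hreg
    rw [mem_maximalIdeal, mem_nonunits_iff]
    intro hu
    apply hU0
    have : (1 : R) ∈ Module.annihilator R U := by
      have := Ideal.eq_top_of_isUnit_mem _ hra hu
      rw [this]; trivial
    rw [Module.mem_annihilator] at this
    exact subsingleton_of_forall_eq 0 fun u => by rw [← one_smul R u, this u]
  have hlen : rs.length = d := le_antisymm htd hdt
  refine ⟨⟨inferInstance, Or.inr ⟨rs, by rwa [jac_eq], hr, by rw [hd, hlen]⟩⟩, ?_⟩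
  intro V _ _ hV j
  obtain ⟨_, hV | ⟨ys, hy1, hy2, hy3⟩⟩ := hV
  · exact EZ.of_subsingleton_left _
  rw [jac_eq] at hy1
  have hyl : ys.length = d := by rw [hd] at hy3; exact_mod_cast hy3
  exact EZ.depth hsharp ys hy1 V hy2 _ (by omega)

end Gor

end Part3

section Part4
open CategoryTheory Abelian IsLocalRing RingTheory.Sequence
open scoped Pointwise

section Reg

lemma quot_local {A : Type} [CommRing A] [IsLocalRing A] {I : Ideal A} (hI : I ≤ maximalIdeal A) :
    IsLocalRing (A ⧸ I) := by
  have : Nontrivial (A ⧸ I) := Ideal.Quotient.nontrivial_iff.mpr (by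
    rintro rfl; exact (maximalIdeal.isMaximal A).ne_top (top_le_iff.mp hI))
  exact IsLocalRing.of_surjective' (Ideal.Quotient.mk I) Ideal.Quotient.mk_surjective

lemma dim_le_quot_succ {A : Type} [CommRing A] [IsNoetherianRing A] [IsLocalRing A] {x : A}
    (hx : x ∈ maximalIdeal A) : ringKrullDim A ≤ ringKrullDim (A ⧸ Ideal.span {x}) + 1 := by
  have := ringKrullDim_le_ringKrullDim_quotient_add_card (R := A) {x}
    (by rw [IsLocalRing.ringJacobson_eq_maximalIdeal]; simpa using hx)
  rw [Finset.coe_singleton, Finset.card_singleton] at this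
  exact_mod_cast this

lemma dim_eq_of_regular {A : Type} [CommRing A] [IsNoetherianRing A] [IsLocalRing A] {rs : List A}
    (h : Ideal.ofList rs = maximalIdeal A) (hr : IsWeaklyRegular A rs) :
    ringKrullDim A = rs.length := by
  have hr' : IsRegular A rs :=
    (IsLocalRing.isRegular_iff_isWeaklyRegular_of_subset_maximalIdeal
      (fun x hx => h ▸ Ideal.subset_span hx)).mpr hr
  rw [← ringKrullDim_add_length_eq_ringKrullDim_of_isRegular rs hr', h]
  let _ := Ideal.Quotient.field (maximalIdeal A)
  rw [ringKrullDim_eq_zero_of_field, zero_add]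

lemma exists_prime_dim {A : Type} [CommRing A] {n : ℕ}
    (h : (n : WithBot ℕ∞) ≤ ringKrullDim A) :
    ∃ q : Ideal A, q.IsPrime ∧ (n : WithBot ℕ∞) ≤ ringKrullDim (A ⧸ q) := by
  obtain ⟨l, hl⟩ := Order.le_krullDim_iff.mp h
  refine ⟨l.head.1, l.head.2, ?_⟩
  rw [ringKrullDim_quotient, Order.le_krullDim_iff]
  refine ⟨⟨l.length, fun i => ⟨l i, ?_⟩, fun i => ?_⟩, hl⟩
  · rw [PrimeSpectrum.mem_zeroLocus]
    exact LTSeries.head_le l i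
  · exact l.step i

lemma reg_aux (n : ℕ) : ∀ (A : Type) [CommRing A] [IsNoetherianRing A] [IsLocalRing A]
    (s : Finset A), Ideal.span (s : Set A) = maximalIdeal A → s.card ≤ n →
    (n : WithBot ℕ∞) ≤ ringKrullDim A →
    IsDomain A ∧ ∃ rs : List A, Ideal.ofList rs = maximalIdeal A ∧ IsWeaklyRegular A rs ∧
      rs.length = n := by
  classical
  induction n with
  | zero =>
    intro A _ _ _ s hs hc _
    have : s = ∅ := Finset.card_eq_zero.mp (by omega)
    subst this
    simp only [Finset.coe_empty, Ideal.span_empty] at hs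
    have hf : IsField A := IsLocalRing.isField_iff_maximalIdeal_eq.mpr hs.symm
    exact ⟨hf.isDomain, [], by simpa using hs, IsWeaklyRegular.nil A A, rfl⟩
  | succ n ih =>
    intro A _ _ _ s hs hc hdim
    obtain ⟨q, hq, hqd⟩ := exists_prime_dim hdim
    have hqm : q ≤ maximalIdeal A := le_maximalIdeal hq.ne_top
    obtain ⟨x, hxs, hxq⟩ : ∃ x ∈ s, x ∉ q := by
      by_contra hcon
      push Not at hcon
      have : maximalIdeal A ≤ q := hs ▸ Ideal.span_le.mpr hcon
      have : q = maximalIdeal A := le_antisymm hqm this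
      subst this
      let _ := Ideal.Quotient.field (maximalIdeal A)
      rw [ringKrullDim_eq_zero_of_field] at hqd
      have : n + 1 ≤ 0 := by exact_mod_cast hqd
      omega
    have hxm : x ∈ maximalIdeal A := hs ▸ Ideal.subset_span hxs
    have hxle : Ideal.span {x} ≤ maximalIdeal A := (Ideal.span_singleton_le_iff_mem _).mpr hxm
    have := quot_local hxle
    have := quot_local hqm
    have hmapm : (maximalIdeal A).map (Ideal.Quotient.mk (Ideal.span {x})) =
        maximalIdeal (A ⧸ Ideal.span {x}) :=
      map_maximalIdeal_of_surjective _ Ideal.Quotient.mk_surjective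
    have hmapq : (maximalIdeal A).map (Ideal.Quotient.mk q) = maximalIdeal (A ⧸ q) :=
      map_maximalIdeal_of_surjective _ Ideal.Quotient.mk_surjective
    have hdB : (n : WithBot ℕ∞) ≤ ringKrullDim (A ⧸ Ideal.span {x}) := by
      obtain ⟨e, he⟩ := exists_dim (R := A ⧸ Ideal.span {x})
      have := hdim.trans (dim_le_quot_succ hxm)
      rw [he] at this ⊢
      have : n + 1 ≤ e + 1 := by exact_mod_cast this
      exact_mod_cast Nat.le_of_succ_le_succ this
    obtain ⟨hBdom, rs', hrs1, hrs2, hrs3⟩ := ih (A ⧸ Ideal.span {x})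
      ((s.erase x).image (Ideal.Quotient.mk (Ideal.span {x})))
      (by
        rw [← hmapm, ← hs, Ideal.map_span]
        apply le_antisymm
        · apply Ideal.span_mono
          rw [Finset.coe_image]
          exact Set.image_mono (by simp)
        · rw [Ideal.span_le]
          rintro _ ⟨y, hy, rfl⟩
          by_cases hyx : y = x
          · subst hyx
            have : Ideal.Quotient.mk (Ideal.span {y}) y = 0 :=
              Ideal.Quotient.eq_zero_iff_mem.mpr (Ideal.mem_span_singleton_self y)
            rw [this]; exact Submodule.zero_mem _
          · refine Ideal.subset_span ?_
            rw [Finset.coe_image]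
            exact ⟨y, by simp [hyx]; simpa using hy, rfl⟩)
      (Finset.card_image_le.trans (by rw [Finset.card_erase_of_mem hxs]; omega)) hdB
    have hdimB : ringKrullDim (A ⧸ Ideal.span {x}) = n := by
      rw [dim_eq_of_regular hrs1 hrs2, hrs3]
    have hqx : q ≤ Ideal.span {x} := by
      by_contra hcon
      obtain ⟨y, hyq, hyx⟩ := Set.not_subset.mp hcon
      have hy0 : Ideal.Quotient.mk (Ideal.span {x}) y ≠ 0 := by
        rwa [ne_eq, Ideal.Quotient.eq_zero_iff_mem]
      have hym : Ideal.Quotient.mk (Ideal.span {x}) y ∈ maximalIdeal (A ⧸ Ideal.span {x}) :=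
        hmapm ▸ Ideal.mem_map_of_mem _ (hqm hyq)
      have h1 := ringKrullDim_quotient_span_singleton_succ_eq_ringKrullDim_of_mem_nonZeroDivisors
        (mem_nonZeroDivisors_of_ne_zero hy0) hym
      have hxm' : Ideal.Quotient.mk q x ∈ maximalIdeal (A ⧸ q) :=
        hmapq ▸ Ideal.mem_map_of_mem _ hxm
      have h2 := hqd.trans (dim_le_quot_succ hxm')
      let ψ : A →+* (A ⧸ q) ⧸ Ideal.span {Ideal.Quotient.mk q x} :=
        (Ideal.Quotient.mk _).comp (Ideal.Quotient.mk q)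
      have hψ : Function.Surjective ψ :=
        Ideal.Quotient.mk_surjective.comp Ideal.Quotient.mk_surjective
      have hψx : ∀ a ∈ Ideal.span {x}, ψ a = 0 := by
        intro a ha
        obtain ⟨b, rfl⟩ := Ideal.mem_span_singleton'.mp ha
        rw [map_mul]
        have : ψ x = 0 := Ideal.Quotient.eq_zero_iff_mem.mpr (Ideal.mem_span_singleton_self _)
        rw [this, mul_zero]
      have hψy : ψ y = 0 := by
        have : Ideal.Quotient.mk q y = 0 := Ideal.Quotient.eq_zero_iff_mem.mpr hyq
        simp [ψ, this]
      let ψ1 := Ideal.Quotient.lift (Ideal.span {x}) ψ hψx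
      have hψ1 : Function.Surjective ψ1 := Ideal.Quotient.lift_surjective_of_surjective _ _ hψ
      have hψ1y : ∀ a ∈ Ideal.span {Ideal.Quotient.mk (Ideal.span {x}) y}, ψ1 a = 0 := by
        intro a ha
        obtain ⟨b, rfl⟩ := Ideal.mem_span_singleton'.mp ha
        rw [map_mul]
        have : ψ1 (Ideal.Quotient.mk (Ideal.span {x}) y) = 0 := hψy
        rw [this, mul_zero]
      have h3 := ringKrullDim_le_of_surjective _
        (Ideal.Quotient.lift_surjective_of_surjective _ hψ1y hψ1)
      have h4 : ((n+1 : ℕ) : WithBot ℕ∞) ≤ n := by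
        refine h2.trans ?_
        rw [← hdimB, ← h1]
        gcongr
      have : n + 1 ≤ n := by exact_mod_cast h4
      omega
    have hq0 : q = ⊥ := by
      refine Submodule.eq_bot_of_le_smul_of_le_jacobson_bot (maximalIdeal A) q
        (IsNoetherian.noetherian q) ?_ (IsLocalRing.maximalIdeal_le_jacobson _)
      intro y hy
      obtain ⟨a, rfl⟩ := Ideal.mem_span_singleton'.mp (hqx hy)
      have ha := (hq.mem_or_mem hy).resolve_right hxq
      rw [mul_comm]
      exact Submodule.smul_mem_smul hxm ha
    subst hq0
    have hdom : IsDomain A := IsDomain.of_bot_isPrime A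
    obtain ⟨rs, hrs⟩ : ∃ rs : List A, rs.map (Ideal.Quotient.mk (Ideal.span {x})) = rs' :=
      List.map_surjective_iff.mpr Ideal.Quotient.mk_surjective rs'
    refine ⟨hdom, x :: rs, ?_, ?_, by rw [← hrs3, ← hrs]; simp⟩
    · rw [Ideal.ofList_cons, sup_comm]
      have e1 := Ideal.comap_map_of_surjective' (Ideal.Quotient.mk (Ideal.span {x}))
        Ideal.Quotient.mk_surjective (Ideal.ofList rs)
      rw [Ideal.map_ofList, hrs, hrs1, Ideal.mk_ker] at e1
      rw [← e1]
      rw [← hmapm, Ideal.comap_map_of_surjective' _ Ideal.Quotient.mk_surjective, Ideal.mk_ker]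
      exact sup_eq_left.mpr hxle
    · rw [isWeaklyRegular_cons_iff]
      constructor
      · rw [isSMulRegular_iff_right_eq_zero_of_smul]
        intro y hy
        have hx0 : x ≠ 0 := fun h => hxq (by simp [h])
        rw [smul_eq_mul] at hy
        exact (mul_eq_zero.mp hy).resolve_left hx0
      · have e : QuotSMulTop x A ≃ₗ[A] (A ⧸ Ideal.span {x}) :=
          Submodule.quotEquivOfEq _ _ (by
            rw [← Ideal.submodule_span_eq]
            rw [← Submodule.ideal_span_singleton_smul]
            simp)
        rw [e.isWeaklyRegular_congr, ← isWeaklyRegular_map_algebraMap_iff (A ⧸ Ideal.span {x})]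
        change IsWeaklyRegular _ (rs.map (Ideal.Quotient.mk (Ideal.span {x})))
        rw [hrs]
        exact hrs2

lemma regular_EZ {A : Type} [CommRing A] (hA : IsRegularLocalRing A) {d : ℕ}
    (hd : ringKrullDim A ≤ d) (L N : Type) [AddCommGroup L] [Module A L] [Module.Finite A L]
    [AddCommGroup N] [Module A N] [Module.Finite A N] (j : ℕ) (hj : d < j) : EZ A L N j := by
  obtain ⟨hn, hl, s, hs, hc⟩ := hA
  rw [jac_eq] at hs
  obtain ⟨_, rs, h1, h2, h3⟩ := reg_aux s.card A s hs le_rfl hc.le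
  have hsd : s.card ≤ d := by rw [← hc] at hd; exact_mod_cast hd
  refine bass (n := d+1) ?_ L j hj
  intro j hj
  have := EZ.quot_list (N := N) (n := 0) rs h2 (fun j hj => by
    obtain ⟨j, rfl⟩ : ∃ i, j = i + 1 := ⟨j-1, by omega⟩
    exact EZ.of_projective j) j (by omega)
  exact EZ.congr_left (Submodule.quotEquivOfEq _ _ (by rw [h1]; simp)) this

lemma dim_loc_le {R : Type} [CommRing R] (p : Ideal R) [p.IsPrime] :
    ringKrullDim (Localization p.primeCompl) ≤ ringKrullDim R := by
  have := IsLocalization.AtPrime.ringKrullDim_eq_height p (Localization.AtPrime p)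
  change ringKrullDim (Localization.AtPrime p) ≤ _
  rw [this]
  exact Ideal.height_le_ringKrullDim_of_ne_top (Ideal.IsPrime.ne_top inferInstance)

end Reg

end Part4

section Part5
open CategoryTheory Abelian IsLocalRing RingTheory.Sequence
open scoped Pointwise

section Depth
variable {R : Type} [CommRing R]

lemma quot_inj {A B C : Type} [AddCommGroup A] [Module R A] [AddCommGroup B] [Module R B]
    [AddCommGroup C] [Module R C] {f : A →ₗ[R] B} {g : B →ₗ[R] C} (h : Function.Exact f g)
    (hf : Function.Injective f) {x : R} (hx : IsSMulRegular C x) :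
    Function.Injective (QuotSMulTop.map x f) := by
  have h0 : Function.Exact (0 : A →ₗ[R] A) f := by
    rw [LinearMap.exact_zero_iff_injective]; exact hf
  have := QuotSMulTop.map_first_exact_on_four_term_exact_of_isSMulRegular_last h0 h hx
  rw [map_zero, LinearMap.exact_zero_iff_injective] at this
  exact this

lemma wr_left (l : List R) : ∀ (i : ℕ) {A B C : Type} [AddCommGroup A] [Module R A]
    [AddCommGroup B] [Module R B]
    [AddCommGroup C] [Module R C] {f : A →ₗ[R] B} {g : B →ₗ[R] C}, Function.Exact f g →
    Function.Injective f → Function.Surjective g → IsWeaklyRegular B l →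
    IsWeaklyRegular C (l.take i) → IsWeaklyRegular A (l.take (i+1)) := by
  induction l with
  | nil => intro i A B C _ _ _ _ _ _ f g _ _ _ _ _; simp
  | cons x l ih =>
    intro i A B C _ _ _ _ _ _ f g h hf hg hB hC
    rw [isWeaklyRegular_cons_iff] at hB
    rw [List.take_succ_cons, isWeaklyRegular_cons_iff]
    refine ⟨hB.1.of_injective f hf, ?_⟩
    cases i with
    | zero => simp
    | succ i =>
      rw [List.take_succ_cons, isWeaklyRegular_cons_iff] at hC
      exact ih i (QuotSMulTop.map_exact x h hg) (quot_inj h hf hC.1)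
        (QuotSMulTop.map_surjective x hg) hB.2 hC.2

lemma wr_mid (l : List R) : ∀ {A B C : Type} [AddCommGroup A] [Module R A]
    [AddCommGroup B] [Module R B]
    [AddCommGroup C] [Module R C] {f : A →ₗ[R] B} {g : B →ₗ[R] C}, Function.Exact f g →
    Function.Injective f → Function.Surjective g → IsWeaklyRegular A l →
    IsWeaklyRegular C l → IsWeaklyRegular B l := by
  induction l with
  | nil => intro A B C _ _ _ _ _ _ f g _ _ _ _ _; simp
  | cons x l ih =>
    intro A B C _ _ _ _ _ _ f g h hf hg hA hC
    rw [isWeaklyRegular_cons_iff] at hA hC ⊢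
    refine ⟨?_, ih (QuotSMulTop.map_exact x h hg) (quot_inj h hf hC.1)
        (QuotSMulTop.map_surjective x hg) hA.2 hC.2⟩
    rw [isSMulRegular_iff_right_eq_zero_of_smul] at *
    intro b hb
    have hgb : g b = 0 := hC.1 _ (by rw [← map_smul, hb, map_zero])
    obtain ⟨a, rfl⟩ := (h b).mp hgb
    rw [← map_smul] at hb
    rw [hA.1 a (hf (by rw [hb, map_zero])), map_zero]

lemma wr_sub (l : List R) : ∀ {A : Type} [AddCommGroup A] [Module R A] [Subsingleton A],
    IsWeaklyRegular A l := by
  induction l with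
  | nil => intro A _ _ _; simp
  | cons x l ih =>
    intro A _ _ _
    rw [isWeaklyRegular_cons_iff]
    exact ⟨fun _ _ _ => Subsingleton.elim _ _, ih⟩

lemma wr_pi {l : List R} (h : IsWeaklyRegular R l) (n : ℕ) : IsWeaklyRegular (Fin n → R) l := by
  induction n with
  | zero => exact wr_sub l
  | succ n ih =>
    rw [← (Fin.consLinearEquiv R (fun _ : Fin (n+1) => R)).isWeaklyRegular_congr]
    exact wr_mid l (f := LinearMap.inl R R (Fin n → R)) (g := LinearMap.snd R R (Fin n → R))
      .inl_snd LinearMap.inl_injective LinearMap.snd_surjective h ih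

end Depth

section Cover
variable {R : Type} [CommRing R] [IsLocalRing R]

lemma mem_smul_top_of_coord {n : ℕ} {I : Ideal R} {v : Fin n → R} (h : ∀ i, v i ∈ I) :
    v ∈ I • (⊤ : Submodule R (Fin n → R)) := by
  have : v = ∑ i, v i • (Pi.single i (1:R) : Fin n → R) := by
    rw [← Finset.univ_sum_single v]
    simp [← Pi.single_smul]
  rw [this]
  exact Submodule.sum_mem _ fun i _ => Submodule.smul_mem_smul (h i) trivial

lemma coord_of_mem_smul_top {n : ℕ} {I : Ideal R} {v : Fin n → R}
    (h : v ∈ I • (⊤ : Submodule R (Fin n → R))) (i : Fin n) : v i ∈ I := by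
  refine Submodule.smul_induction_on h ?_ ?_
  · intro r hr x _; exact I.mul_mem_right _ hr
  · intro x y hx hy; exact I.add_mem hx hy

lemma exists_min_cover (M : Type) [AddCommGroup M] [Module R M] [Module.Finite R M] :
    ∃ (n : ℕ) (π : (Fin n → R) →ₗ[R] M), Function.Surjective π ∧
      LinearMap.ker π ≤ maximalIdeal R • (⊤ : Submodule R (Fin n → R)) := by
  classical
  have hex : ∃ (n : ℕ), ∃ (π : (Fin n → R) →ₗ[R] M), Function.Surjective π :=
    Module.Finite.exists_fin' R M
  obtain ⟨π, hπ⟩ := Nat.find_spec hex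
  refine ⟨_, π, hπ, ?_⟩
  intro v hv
  apply mem_smul_top_of_coord
  intro i
  by_contra hi
  have hu : IsUnit (v i) := by simpa using hi
  obtain ⟨c, hc⟩ := hu.exists_left_inv
  generalize hn : Nat.find hex = n at *
  cases n with
  | zero => exact i.elim0
  | succ n =>
    have hlt : n < Nat.find hex := by omega
    refine Nat.find_min hex hlt
      ⟨π ∘ₗ Function.ExtendByZero.linearMap R (Fin.succAbove i), ?_⟩
    intro y
    obtain ⟨u, rfl⟩ := hπ y
    let u' := u - (u i * c) • v
    have hu' : π u' = π u := by
      simp only [u', map_sub, map_smul, LinearMap.mem_ker.mp hv, smul_zero, sub_zero]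
    refine ⟨fun j => u' (i.succAbove j), ?_⟩
    rw [← hu', LinearMap.comp_apply]
    congr 1
    funext k
    simp only [Function.ExtendByZero.linearMap_apply]
    by_cases hk : k = i
    · subst hk
      rw [Function.extend_apply' _ _ _ (by rintro ⟨a, ha⟩; exact Fin.succAbove_ne _ _ ha)]
      simp [u', mul_assoc, hc]
    · obtain ⟨a, rfl⟩ := Fin.exists_succAbove_eq hk
      rw [(Fin.succAbove_right_injective).extend_apply]

end Cover

section Om
variable {R : Type} [CommRing R] [IsLocalRing R]

/-- A choice of minimal free cover. -/
noncomputable def cov (M : ModuleCat.{0} R) : Σ n : ℕ, ((Fin n → R) →ₗ[R] (M : Type)) := by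
  classical
  exact if h : ∃ c : Σ n : ℕ, ((Fin n → R) →ₗ[R] (M : Type)), Function.Surjective c.2 ∧
    LinearMap.ker c.2 ≤ maximalIdeal R • (⊤ : Submodule R (Fin c.1 → R)) then h.choose else ⟨0, 0⟩

lemma cov_spec (M : ModuleCat.{0} R) [Module.Finite R M] : Function.Surjective (cov M).2 ∧
    LinearMap.ker (cov M).2 ≤ maximalIdeal R • (⊤ : Submodule R (Fin (cov M).1 → R)) := by
  have h : ∃ c : Σ n : ℕ, ((Fin n → R) →ₗ[R] (M : Type)), Function.Surjective c.2 ∧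
      LinearMap.ker c.2 ≤ maximalIdeal R • (⊤ : Submodule R (Fin c.1 → R)) := by
    obtain ⟨n, π, h⟩ := exists_min_cover (R := R) M
    exact ⟨⟨n, π⟩, h⟩
  unfold cov
  rw [dif_pos h]
  exact h.choose_spec

/-- The chosen first syzygy. -/
noncomputable def Om (M : ModuleCat.{0} R) : ModuleCat.{0} R :=
  ModuleCat.of R (LinearMap.ker (cov M).2)

/-- The inclusion of the syzygy. -/
noncomputable def omι (M : ModuleCat.{0} R) : (Om M : Type) →ₗ[R] (Fin (cov M).1 → R) :=
  (LinearMap.ker (cov M).2).subtype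

lemma omι_inj (M : ModuleCat.{0} R) : Function.Injective (omι M) := Subtype.val_injective

lemma om_exact (M : ModuleCat.{0} R) : Function.Exact (omι M) (cov M).2 :=
  LinearMap.exact_subtype_ker_map _

variable [IsNoetherianRing R]

lemma om_finite (M : ModuleCat.{0} R) : Module.Finite R (Om M) :=
  inferInstanceAs (Module.Finite R (LinearMap.ker (cov M).2))

lemma om_iter_finite (M : ModuleCat.{0} R) [h : Module.Finite R M] (j : ℕ) :
    Module.Finite R (Om^[j] M) := by
  cases j with
  | zero => exact h
  | succ j => rw [Function.iterate_succ_apply']; exact om_finite _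

lemma om_EZ {M : ModuleCat.{0} R} [Module.Finite R M] {N : Type} [AddCommGroup N] [Module R N]
    {j : ℕ} (h : EZ R M N (j+2)) : EZ R (Om M) N (j+1) :=
  EZ.contra_left (om_exact M) (omι_inj M) (cov_spec M).1 (EZ.of_projective j) h

lemma om_iter_acyc {M : ModuleCat.{0} R} [Module.Finite R M] {N : Type} [AddCommGroup N]
    [Module R N] (h : ∀ j, EZ R M N (j+1)) (i : ℕ) :
    ∀ j, EZ R (Om^[i] M) N (j+1) := by
  induction i with
  | zero => exact h
  | succ i ih =>
    intro j
    have := om_iter_finite M i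
    rw [Function.iterate_succ_apply']
    exact om_EZ (ih (j+1))

lemma om_iter_depth {M : ModuleCat.{0} R} [Module.Finite R M] {rs : List R}
    (hr : IsWeaklyRegular R rs) (i : ℕ) : IsWeaklyRegular (Om^[i] M) (rs.take i) := by
  induction i with
  | zero => exact IsWeaklyRegular.nil _ _
  | succ i ih =>
    have := om_iter_finite M i
    rw [Function.iterate_succ_apply']
    exact wr_left rs i (om_exact _) (omι_inj _) (cov_spec _).1 (wr_pi hr _) ih

end Om

end Part5

section Part6
open CategoryTheory Abelian IsLocalRing RingTheory.Sequence
open scoped Pointwise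

section Ext1
variable {R : Type} [CommRing R]
variable {A B C N : Type} [AddCommGroup A] [Module R A] [AddCommGroup B] [Module R B]
  [AddCommGroup C] [Module R C] [AddCommGroup N] [Module R N]

lemma extend_of_EZ {f : A →ₗ[R] B} {g : B →ₗ[R] C} (h : Function.Exact f g)
    (hf : Function.Injective f) (hg : Function.Surjective g) (hE : EZ R C N 1) (u : A →ₗ[R] N) :
    ∃ v : B →ₗ[R] N, v ∘ₗ f = u := by
  obtain ⟨y, hy⟩ := Ext.contravariant_sequence_exact₁ (sc_shortExact h hf hg) (ModuleCat.of R N)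
    (n₀ := 0) (n₁ := 1)
    (Ext.mk₀ (show (sc f g h).X₁ ⟶ ModuleCat.of R N from ModuleCat.ofHom u)) rfl
    (Subsingleton.elim (α := Ext (ModuleCat.of R C) (ModuleCat.of R N) 1) _ _)
  obtain ⟨v, rfl⟩ := (Ext.mk₀_bijective _ _).surjective y
  rw [Ext.mk₀_comp_mk₀] at hy
  have := (Ext.mk₀_bijective _ _).injective hy
  refine ⟨v.hom, ?_⟩
  have h2 := congrArg ModuleCat.Hom.hom this
  exact h2

lemma projective_of_EZ {f : A →ₗ[R] B} {g : B →ₗ[R] C} (h : Function.Exact f g)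
    (hf : Function.Injective f) (hg : Function.Surjective g) (hE : EZ R C A 1) :
    ∃ s : C →ₗ[R] B, g ∘ₗ s = LinearMap.id := by
  obtain ⟨v, hv⟩ := extend_of_EZ h hf hg hE LinearMap.id
  have h3 : Function.Injective f ∧ ∃ l, g ∘ₗ l = LinearMap.id :=
    (List.TFAE.out (Function.Exact.split_tfae' h) 1 0).mp
    (show Function.Surjective g ∧ ∃ l, l ∘ₗ f = LinearMap.id from ⟨hg, v, hv⟩)
  exact h3.2

end Ext1

section Loc
variable {R : Type} [CommRing R] [IsLocalRing R] [IsNoetherianRing R]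

lemma loc_EZ (p : Ideal R) [p.IsPrime] {d : ℕ}
    (hE : ∀ (L N : Type) [AddCommGroup L] [Module (Localization p.primeCompl) L]
      [Module.Finite (Localization p.primeCompl) L]
      [AddCommGroup N] [Module (Localization p.primeCompl) N]
      [Module.Finite (Localization p.primeCompl) N] (j : ℕ),
      d < j → EZ (Localization p.primeCompl) L N j)
    (U : ModuleCat.{0} R) [Module.Finite R U] (N : Type) [AddCommGroup N]
    [Module (Localization p.primeCompl) N]
    [Module.Finite (Localization p.primeCompl) N] (i : ℕ) :
    ∀ j, d < j + 1 + i → EZ (Localization p.primeCompl)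
      (LocalizedModule p.primeCompl (Om^[i] U)) N (j+1) := by
  induction i with
  | zero => intro j hj; exact hE (LocalizedModule p.primeCompl U) N _ hj
  | succ i ih =>
    intro j hj
    have := om_iter_finite U i
    rw [Function.iterate_succ_apply']
    generalize Om^[i] U = V at *
    have hP : Module.Projective (Localization p.primeCompl)
        (LocalizedModule p.primeCompl (Fin (cov V).1 → R)) :=
      Module.projective_of_isLocalizedModule p.primeCompl
        (LocalizedModule.mkLinearMap p.primeCompl (Fin (cov V).1 → R))
    exact EZ.contra_left (f := LocalizedModule.map p.primeCompl (omι V))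
      (g := LocalizedModule.map p.primeCompl (cov V).2)
      (LocalizedModule.map_exact _ _ _ (om_exact V))
      (LocalizedModule.map_injective _ _ (omι_inj V))
      (LocalizedModule.map_surjective _ _ (cov_spec V).1)
      (EZ.of_projective j) (ih (j+1) (by omega))

/-- The ideal of elements acting stably trivially on `V`. -/
noncomputable def stIdeal (V : ModuleCat.{0} R) : Ideal R where
  carrier := {r | ∃ h : (V : Type) →ₗ[R] (Fin (cov V).1 → R), (cov V).2 ∘ₗ h = r • LinearMap.id}
  zero_mem' := ⟨0, by simp⟩
  add_mem' := by
    rintro a b ⟨h, hh⟩ ⟨k, hk⟩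
    exact ⟨h + k, by rw [LinearMap.comp_add, hh, hk, add_smul]⟩
  smul_mem' := by
    rintro c a ⟨h, hh⟩
    exact ⟨c • h, by rw [LinearMap.comp_smul, hh, smul_eq_mul, mul_smul]⟩

lemma stIdeal_not_le (p : Ideal R) [p.IsPrime] {d : ℕ}
    (hE : ∀ (L N : Type) [AddCommGroup L] [Module (Localization p.primeCompl) L]
      [Module.Finite (Localization p.primeCompl) L]
      [AddCommGroup N] [Module (Localization p.primeCompl) N]
      [Module.Finite (Localization p.primeCompl) N] (j : ℕ),
      d < j → EZ (Localization p.primeCompl) L N j)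
    (U : ModuleCat.{0} R) [Module.Finite R U] : ¬ stIdeal (Om^[d] U) ≤ p := by
  have hfin := om_iter_finite U d
  have key := fun (N : Type) [AddCommGroup N] [Module (Localization p.primeCompl) N]
    [Module.Finite (Localization p.primeCompl) N] => loc_EZ p hE U N d 0 (by omega)
  generalize Om^[d] U = V at *
  have := om_finite V
  obtain ⟨σ, hσ⟩ := projective_of_EZ (f := LocalizedModule.map p.primeCompl (omι V))
      (g := LocalizedModule.map p.primeCompl (cov V).2)
      (LocalizedModule.map_exact _ _ _ (om_exact V))
      (LocalizedModule.map_injective _ _ (omι_inj V))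
      (LocalizedModule.map_surjective _ _ (cov_spec V).1) (key _)
  have hpres : Module.FinitePresentation R V := Module.finitePresentation_of_finite R V
  obtain ⟨h, s, hs⟩ := Module.FinitePresentation.exists_lift_of_isLocalizedModule p.primeCompl
    (LocalizedModule.mkLinearMap p.primeCompl (Fin (cov V).1 → R))
    ((σ.restrictScalars R) ∘ₗ LocalizedModule.mkLinearMap p.primeCompl V)
  have h1 : (LocalizedModule.mkLinearMap p.primeCompl V).comp ((cov V).2 ∘ₗ h) =
    (LocalizedModule.mkLinearMap p.primeCompl V).comp ((s : R) • LinearMap.id) := by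
    ext v
    have e1 := LinearMap.congr_fun hs v
    have e2 := LinearMap.congr_fun hσ (LocalizedModule.mkLinearMap p.primeCompl V v)
    have e3 : (LocalizedModule.mkLinearMap p.primeCompl V) ((cov V).2 (h v)) =
      LocalizedModule.map p.primeCompl (cov V).2
        (LocalizedModule.mkLinearMap p.primeCompl (Fin (cov V).1 → R) (h v)) := by
      simp [LocalizedModule.mkLinearMap_apply, LocalizedModule.map_mk]
    simp only [LinearMap.comp_apply] at e1 e2 ⊢
    rw [e3, e1]
    have e4 : (s • ((σ.restrictScalars R) ∘ₗ LocalizedModule.mkLinearMap p.primeCompl V)) v =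
      (s : R) • σ (LocalizedModule.mkLinearMap p.primeCompl V v) := rfl
    rw [e4, LinearMap.map_smul_of_tower, e2]
    simp
  obtain ⟨s', hs'⟩ := Module.Finite.exists_smul_of_comp_eq_of_isLocalizedModule p.primeCompl
    (LocalizedModule.mkLinearMap p.primeCompl V) _ _ h1
  intro hle
  have hmem : (s' * s : R) ∈ stIdeal V := by
    refine ⟨(s' : R) • h, ?_⟩
    rw [LinearMap.comp_smul, mul_smul]
    exact hs'
  exact (s' * s).2 (hle hmem)

lemma pow_le_stIdeal (hsing : IsolatedSingularity R) {d : ℕ} (hd : ringKrullDim R = d)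
    (U : ModuleCat.{0} R) [Module.Finite R U] :
    ∃ n, maximalIdeal R ^ n ≤ stIdeal (Om^[d] U) := by
  apply Ideal.exists_pow_le_of_le_radical_of_fg
  · rw [Ideal.radical_eq_sInf]
    refine le_sInf ?_
    rintro p ⟨hp, hprime⟩
    by_contra hcon
    have hpm : p ≠ (⊥ : Ideal R).jacobson := by
      rw [jac_eq]; rintro rfl; exact hcon le_rfl
    have hreg := hsing p hprime hpm
    exact stIdeal_not_le p (d := d) (fun L N _ _ _ _ _ _ j hj =>
      regular_EZ hreg ((dim_loc_le p).trans hd.le) L N j hj) U hp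
  · exact IsNoetherian.noetherian _

lemma length_ne_top {n : ℕ} (L : Type) [AddCommGroup L] [Module R L] [hL : Module.Finite R L]
    (h : maximalIdeal R ^ n ≤ Module.annihilator R L) : Module.length R L ≠ ⊤ := by
  revert h
  induction hL using IsNoetherianRing.induction_on_isQuotientEquivQuotientPrime R with
  | subsingleton L => intro _; simp [Module.length_eq_zero]
  | quotient L q e =>
    intro h
    have hann : Module.annihilator R L = q.1 := by
      rw [e.annihilator_eq, Ideal.annihilator_quotient]
    rw [hann] at h
    have hq := q.2
    have : q.1 = maximalIdeal R :=
      le_antisymm (le_maximalIdeal hq.ne_top) (hq.le_of_pow_le h)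
    rw [e.length_eq, this]
    have : IsSimpleModule R (R ⧸ maximalIdeal R) :=
      isSimpleModule_iff_isCoatom.mpr (Ideal.isMaximal_def.mp (maximalIdeal.isMaximal R))
    rw [Module.length_eq_one]
    simp
  | exact N₁ N₂ N₃ f g hf hg hfg h1 h3 =>
    intro h4
    rw [Module.length_eq_add_of_exact f g hf hg hfg]
    exact WithTop.add_ne_top.mpr ⟨h1 (h4.trans (LinearMap.annihilator_le_of_injective f hf)),
      h3 (h4.trans (LinearMap.annihilator_le_of_surjective g hg))⟩

lemma ext_length_ne_top (hsing : IsolatedSingularity R) {d : ℕ} (hd : ringKrullDim R = d)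
    (U : ModuleCat.{0} R) [Module.Finite R U] (M : ModuleCat.{0} R) [Module.Finite R M] :
    Module.length R (Ext (Om^[d] U) M 1) ≠ ⊤ := by
  have hfin := om_iter_finite U d
  obtain ⟨n, hn⟩ := pow_le_stIdeal hsing hd U
  generalize Om^[d] U = V at *
  refine length_ne_top (n := n) _ (hn.trans ?_)
  rintro r ⟨h, hh⟩
  rw [Module.mem_annihilator]
  intro y
  have e1 : r • 𝟙 V = ModuleCat.ofHom h ≫ ModuleCat.ofHom (cov V).2 := by
    ext1
    exact hh.symm
  rw [← Ext.mk₀_id_comp y, ← Ext.smul_comp, ← Ext.mk₀_smul, e1,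
    ← Ext.mk₀_comp_mk₀_assoc]
  have : Subsingleton (Ext (ModuleCat.of R (Fin (cov V).1 → R)) M 1) :=
    EZ.of_projective (N := M) 0
  have e2 : (Ext.mk₀ (ModuleCat.ofHom (cov V).2)).comp y (zero_add 1) = 0 :=
    Subsingleton.elim (α := Ext (ModuleCat.of R (Fin (cov V).1 → R)) M 1) _ _
  rw [e2, Ext.comp_zero]

end Loc

end Part6

section Part7
open CategoryTheory Abelian IsLocalRing RingTheory.Sequence
open scoped Pointwise

section Len
variable {R : Type} [CommRing R] [IsLocalRing R] [IsNoetherianRing R]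

lemma len_add (V : ModuleCat.{0} R) [Module.Finite R V] {Z Y X : ModuleCat.{0} R}
    {f : (Z : Type) →ₗ[R] Y} {g : (Y : Type) →ₗ[R] X} (h : Function.Exact f g)
    (hf : Function.Injective f) (hg : Function.Surjective g)
    (l1 : ∀ u : (V : Type) →ₗ[R] X, ∃ v, g ∘ₗ v = u)
    (l2 : ∀ u : (Om V : Type) →ₗ[R] X, ∃ v, g ∘ₗ v = u) :
    Module.length R (Ext V Y 1) = Module.length R (Ext V Z 1) + Module.length R (Ext V X 1) := by
  have hS : (sc f g h).ShortExact := sc_shortExact h hf hg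
  have hT := sc_shortExact (om_exact V) (omι_inj V) (cov_spec V).1
  refine Module.length_eq_add_of_exact
    (Ext.postcompOfLinear (Ext.mk₀ (show Z ⟶ Y from (sc f g h).f)) R V (add_zero 1))
    (Ext.postcompOfLinear (Ext.mk₀ (show Y ⟶ X from (sc f g h).g)) R V (add_zero 1)) ?_ ?_ ?_
  · rw [← LinearMap.ker_eq_bot, LinearMap.ker_eq_bot']
    intro z hz
    obtain ⟨w, rfl⟩ := Ext.covariant_sequence_exact₁ V hS z hz (n₀ := 0) rfl
    obtain ⟨u, rfl⟩ := (Ext.mk₀_bijective _ _).surjective w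
    obtain ⟨v, hv⟩ := l1 u.hom
    have : u = (show V ⟶ (sc f g h).X₂ from ModuleCat.ofHom v) ≫ (sc f g h).g := by
      ext1; exact hv.symm
    rw [this, ← Ext.mk₀_comp_mk₀, Ext.comp_assoc_of_second_deg_zero, hS.comp_extClass,
      Ext.comp_zero]
  · intro x
    have hp : Subsingleton (Ext (ModuleCat.of R (Fin (cov V).1 → R)) X 1) :=
      EZ.of_projective (N := X) 0
    obtain ⟨w, hw⟩ := Ext.contravariant_sequence_exact₃ hT X x
      (hp.elim _ _) (n₀ := 0) rfl
    obtain ⟨u, rfl⟩ := (Ext.mk₀_bijective _ _).surjective w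
    obtain ⟨v, hv⟩ := l2 u.hom
    have : u = (show (Om V) ⟶ (sc f g h).X₂ from ModuleCat.ofHom v) ≫ (sc f g h).g := by
      ext1; exact hv.symm
    refine ⟨hT.extClass.comp (Ext.mk₀ (show (Om V) ⟶ Y from ModuleCat.ofHom v)) (add_zero 1), ?_⟩
    rw [← hw, this, ← Ext.mk₀_comp_mk₀]
    exact Ext.comp_assoc_of_third_deg_zero _ _ _ _
  · intro y
    constructor
    · intro hy
      exact Ext.covariant_sequence_exact₂ V hS y hy
    · rintro ⟨z, rfl⟩
      change (z.comp (Ext.mk₀ (sc f g h).f) (add_zero 1)).comp (Ext.mk₀ (sc f g h).g) (add_zero 1)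
        = 0
      rw [Ext.comp_assoc_of_third_deg_zero, Ext.mk₀_comp_mk₀, (sc f g h).zero, Ext.mk₀_zero,
        Ext.comp_zero]

/-- Length of `Ext¹(V, M)` as an integer. -/
noncomputable def ell (V M : ModuleCat.{0} R) : ℤ := ((Module.length R (Ext V M 1)).toNat : ℤ)

lemma ell_add (V : ModuleCat.{0} R) [Module.Finite R V]
    (hV : ∀ M : ModuleCat.{0} R, Module.Finite R M → Module.length R (Ext V M 1) ≠ ⊤)
    {Z Y X : ModuleCat.{0} R}
    (hZ : Module.Finite R Z) (hX : Module.Finite R X)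
    {f : (Z : Type) →ₗ[R] Y} {g : (Y : Type) →ₗ[R] X} (h : Function.Exact f g)
    (hf : Function.Injective f) (hg : Function.Surjective g)
    (l1 : ∀ u : (V : Type) →ₗ[R] X, ∃ v, g ∘ₗ v = u)
    (l2 : ∀ u : (Om V : Type) →ₗ[R] X, ∃ v, g ∘ₗ v = u) :
    ell V X + ell V Z - ell V Y = 0 := by
  unfold ell
  rw [len_add V h hf hg l1 l2, ENat.toNat_add (hV Z hZ) (hV X hX)]
  push_cast; ring

lemma ell_add_split (V : ModuleCat.{0} R) [Module.Finite R V]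
    (hV : ∀ M : ModuleCat.{0} R, Module.Finite R M → Module.length R (Ext V M 1) ≠ ⊤)
    {Z Y X : ModuleCat.{0} R}
    (hZ : Module.Finite R Z) (hX : Module.Finite R X)
    (e : (Y : Type) ≃ₗ[R] Prod X Z) :
    ell V X + ell V Z - ell V Y = 0 := by
  have hl : ∀ (W : Type) [AddCommGroup W] [Module R W] (u : W →ₗ[R] X),
      ∃ v, (LinearMap.fst R X Z ∘ₗ e.toLinearMap) ∘ₗ v = u := fun W _ _ u =>
    ⟨e.symm.toLinearMap ∘ₗ LinearMap.inl R X Z ∘ₗ u, by ext; simp⟩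
  refine ell_add V hV hZ hX (f := e.symm.toLinearMap ∘ₗ LinearMap.inr R X Z)
    (g := LinearMap.fst R X Z ∘ₗ e.toLinearMap) ?_ ?_ ?_ (hl V) (hl (Om V))
  · intro y
    constructor
    · intro hy
      refine ⟨(e y).2, ?_⟩
      apply e.injective
      have : (e y).1 = 0 := hy
      simp [Prod.ext_iff, this]
    · rintro ⟨z, rfl⟩; simp
  · exact e.symm.injective.comp LinearMap.inr_injective
  · exact fun x => ⟨e.symm (x, 0), by simp⟩

/-- The additive function on the Grothendieck-type group. -/
noncomputable def phi (V : ModuleCat.{0} R) [Module.Finite R V]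
    (hV : ∀ M : ModuleCat.{0} R, Module.Finite R M → Module.length R (Ext V M 1) ≠ ⊤) :
    GCM R →+ ℤ :=
  QuotientAddGroup.lift (GRel R) (FreeAbelianGroup.lift fun M : CMMod R => ell V M.1) (by
    unfold GRel
    rw [AddSubgroup.closure_le]
    rintro x hx
    obtain ⟨X, Z, Y, ⟨e⟩, rfl⟩ := hx
    simpa using ell_add_split V hV Z.2.1 X.2.1 e)

lemma phi_apply (V : ModuleCat.{0} R) [Module.Finite R V]
    (hV : ∀ M : ModuleCat.{0} R, Module.Finite R M → Module.length R (Ext V M 1) ≠ ⊤)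
    (X Z Y : CMMod R) :
    phi V hV (gcls R (FreeAbelianGroup.of X + FreeAbelianGroup.of Z - FreeAbelianGroup.of Y)) =
      ell V X.1 + ell V Z.1 - ell V Y.1 := by
  have : phi V hV (gcls R (FreeAbelianGroup.of X + FreeAbelianGroup.of Z - FreeAbelianGroup.of Y))
    = FreeAbelianGroup.lift (fun M : CMMod R => ell V M.1)
      (FreeAbelianGroup.of X + FreeAbelianGroup.of Z - FreeAbelianGroup.of Y) := rfl
  rw [this]; simp

end Len

end Part7

section Part8
open CategoryTheory Abelian IsLocalRing RingTheory.Sequence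
open scoped Pointwise

section Cosyz
variable {R : Type} [CommRing R] [IsLocalRing R]

/-- Rank of the free module in the left approximation. -/
noncomputable def csN (X : ModuleCat.{0} R) : ℕ := (cov (ModuleCat.of R (Module.Dual R X))).1

/-- The minimal left approximation by a free module. -/
noncomputable def csι (X : ModuleCat.{0} R) : (X : Type) →ₗ[R] (Fin (csN X) → R) :=
  LinearMap.pi fun i => (show Module.Dual R X from
    (cov (ModuleCat.of R (Module.Dual R X))).2 (Pi.single i (1:R)))

/-- The cosyzygy. -/
noncomputable def Cs (X : ModuleCat.{0} R) : ModuleCat.{0} R :=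
  ModuleCat.of R ((Fin (csN X) → R) ⧸ LinearMap.range (csι X))

/-- The projection to the cosyzygy. -/
noncomputable def csπ (X : ModuleCat.{0} R) : (Fin (csN X) → R) →ₗ[R] (Cs X : Type) :=
  (LinearMap.range (csι X)).mkQ

lemma csπ_surj (X : ModuleCat.{0} R) : Function.Surjective (csπ X) := Submodule.mkQ_surjective _

lemma cs_exact (X : ModuleCat.{0} R) : Function.Exact (csι X) (csπ X) :=
  LinearMap.exact_map_mkQ_range _

lemma cs_finite (X : ModuleCat.{0} R) : Module.Finite R (Cs X) :=
  Module.Finite.of_surjective _ (csπ_surj X)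

lemma cs_eval (X : ModuleCat.{0} R) (r : Fin (csN X) → R) (x : X) :
    (show Module.Dual R X from (cov (ModuleCat.of R (Module.Dual R X))).2 r) x =
      ∑ i, r i * csι X x i := by
  have h1 : r = ∑ i, r i • (Pi.single i (1:R) : Fin (csN X) → R) := by
    rw [← Finset.univ_sum_single r]
    simp [← Pi.single_smul]
  conv_lhs => rw [h1]
  change (show Module.Dual R X from (cov (ModuleCat.of R (Module.Dual R X))).2
    (∑ i, r i • (Pi.single i (1:R) : Fin (csN X) → R))) x = _
  erw [map_sum]
  change (LinearMap.applyₗ (R := R) x) (∑ i, _) = _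
  rw [map_sum]
  refine Finset.sum_congr rfl fun i _ => ?_
  erw [map_smul]
  rfl

variable [IsNoetherianRing R]

lemma dual_finite (X : Type) [AddCommGroup X] [Module R X] [Module.Finite R X] :
    Module.Finite R (Module.Dual R X) := by
  obtain ⟨n, f, hf⟩ := Module.Finite.exists_fin' R X
  refine Module.Finite.of_injective (LinearMap.lcomp R R f) ?_
  intro a b hab
  ext x
  obtain ⟨y, rfl⟩ := hf x
  exact LinearMap.congr_fun hab y

lemma cs_extend1 (X : ModuleCat.{0} R) [Module.Finite R X] (ξ : (X : Type) →ₗ[R] R) :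
    ∃ c : (Fin (csN X) → R) →ₗ[R] R, c ∘ₗ csι X = ξ := by
  have : Module.Finite R (ModuleCat.of R (Module.Dual R X)) :=
    dual_finite X
  obtain ⟨r, hr⟩ := (cov_spec (ModuleCat.of R (Module.Dual R X))).1 ξ
  refine ⟨∑ i, r i • LinearMap.proj i, ?_⟩
  ext x
  have := cs_eval X r x
  rw [hr] at this
  simp only [LinearMap.comp_apply, LinearMap.sum_apply, LinearMap.smul_apply, LinearMap.proj_apply,
    smul_eq_mul]
  exact this.symm

lemma cs_extend (X : ModuleCat.{0} R) [Module.Finite R X] {m : ℕ}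
    (u : (X : Type) →ₗ[R] (Fin m → R)) :
    ∃ c : (Fin (csN X) → R) →ₗ[R] (Fin m → R), c ∘ₗ csι X = u := by
  choose c hc using fun i => cs_extend1 X (LinearMap.proj i ∘ₗ u)
  refine ⟨LinearMap.pi c, ?_⟩
  ext x i
  exact LinearMap.congr_fun (hc i) x

lemma cs_min (X : ModuleCat.{0} R) [Module.Finite R X] (c : (Fin (csN X) → R) →ₗ[R] R)
    (hc : c ∘ₗ csι X = 0) (v : Fin (csN X) → R) : c v ∈ maximalIdeal R := by
  have : Module.Finite R (ModuleCat.of R (Module.Dual R X)) :=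
    dual_finite X
  have hs : ∀ w : Fin (csN X) → R, c w = ∑ i, c (Pi.single i 1) * w i := by
    intro w
    conv_lhs => rw [← Finset.univ_sum_single w, map_sum]
    refine Finset.sum_congr rfl fun i _ => ?_
    rw [mul_comm, ← smul_eq_mul, ← map_smul, ← Pi.single_smul, smul_eq_mul, mul_one]
  have hk : (fun i => c (Pi.single i 1)) ∈
      LinearMap.ker (cov (ModuleCat.of R (Module.Dual R X))).2 := by
    refine LinearMap.ext fun x => ?_
    refine (cs_eval X (fun i => c (Pi.single i 1)) x).trans ?_
    rw [← hs]
    exact LinearMap.congr_fun hc x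
  have hm := (cov_spec (ModuleCat.of R (Module.Dual R X))).2 hk
  rw [hs]
  exact Ideal.sum_mem _ fun i _ => Ideal.mul_mem_right _ _ (coord_of_mem_smul_top hm i)

lemma cs_surj (X : ModuleCat.{0} R) [Module.Finite R X]
    (e : (Fin (csN X) → R) →ₗ[R] (Fin (csN X) → R)) (he : e ∘ₗ csι X = csι X) :
    Function.Surjective e := by
  rw [← LinearMap.range_eq_top, ← top_le_iff]
  refine Submodule.le_of_le_smul_of_le_jacobson_bot (I := maximalIdeal R) Module.Finite.fg_top
    (IsLocalRing.maximalIdeal_le_jacobson _) ?_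
  intro v _
  have : v = e v + (v - e v) := by abel
  rw [this]
  refine Submodule.add_mem_sup ⟨v, rfl⟩ (mem_smul_top_of_coord fun i => ?_)
  refine cs_min X (LinearMap.proj i ∘ₗ (LinearMap.id - e)) ?_ v
  rw [LinearMap.comp_assoc, LinearMap.sub_comp, he, LinearMap.id_comp, sub_self, LinearMap.comp_zero]

lemma desc {A B C : Type} [AddCommGroup A] [Module R A] [AddCommGroup B] [Module R B]
    [AddCommGroup C] [Module R C] (g : A →ₗ[R] B) (hg : Function.Surjective g) (h : A →ₗ[R] C)
    (hh : ∀ a, g a = 0 → h a = 0) : ∃ B' : B →ₗ[R] C, B' ∘ₗ g = h := by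
  refine ⟨(LinearMap.ker g).liftQ h (fun a ha => hh a ha) ∘ₗ
    (g.quotKerEquivOfSurjective hg).symm.toLinearMap, ?_⟩
  ext a
  have : (g.quotKerEquivOfSurjective hg).symm (g a) = (LinearMap.ker g).mkQ a := by
    rw [LinearEquiv.symm_apply_eq]; rfl
  simp [this]
  exact Submodule.liftQ_apply _ _ _

/-- `X` is a retract of `V`. -/
def Ret (X V : ModuleCat.{0} R) : Prop :=
  ∃ (a : (X : Type) →ₗ[R] V) (b : (V : Type) →ₗ[R] X), b ∘ₗ a = LinearMap.id

lemma cs_ret {X V : ModuleCat.{0} R} [Module.Finite R X] [Module.Finite R V]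
    (hX : ¬ Module.Projective R X) (hV : EZ R V R 1) (h : Ret X (Om V)) :
    ¬ Module.Projective R (Cs X) ∧ Ret (Cs X) V := by
  obtain ⟨a, b, hab⟩ := h
  have := cs_finite X
  obtain ⟨α, hα⟩ := cs_extend X (omι V ∘ₗ a)
  obtain ⟨β, hβ⟩ := extend_of_EZ (om_exact V) (omι_inj V) (cov_spec V).1
    (EZ.pi (n := csN X) hV) (csι X ∘ₗ b)
  have hinj : Function.Injective (csι X) := by
    have h1 : Function.Injective (α ∘ₗ csι X) := by
      rw [hα]
      refine (omι_inj V).comp ?_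
      exact Function.LeftInverse.injective (g := b) fun x => LinearMap.congr_fun hab x
    exact Function.Injective.of_comp h1
  have he : (β ∘ₗ α) ∘ₗ csι X = csι X := by
    rw [LinearMap.comp_assoc, hα, ← LinearMap.comp_assoc, hβ, LinearMap.comp_assoc, hab,
      LinearMap.comp_id]
  have hsurj := cs_surj X _ he
  obtain ⟨A, hA⟩ := desc (csπ X) (csπ_surj X) ((cov V).2 ∘ₗ α) (by
    intro p hp
    obtain ⟨x, rfl⟩ := (cs_exact X p).mp hp
    have : α (csι X x) = omι V (a x) := LinearMap.congr_fun hα x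
    rw [LinearMap.comp_apply, this]
    exact (om_exact V).apply_apply_eq_zero _)
  obtain ⟨B, hB⟩ := desc (cov V).2 (cov_spec V).1 (csπ X ∘ₗ β) (by
    intro p hp
    obtain ⟨x, rfl⟩ := (om_exact V p).mp hp
    have : β (omι V x) = csι X (b x) := LinearMap.congr_fun hβ x
    rw [LinearMap.comp_apply, this]
    exact (cs_exact X).apply_apply_eq_zero _)
  have hBA : (B ∘ₗ A) ∘ₗ csπ X = csπ X ∘ₗ (β ∘ₗ α) := by
    rw [LinearMap.comp_assoc, hA, ← LinearMap.comp_assoc, hB, LinearMap.comp_assoc]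
  have hs2 : Function.Surjective (B ∘ₗ A) := by
    refine Function.Surjective.of_comp (g := csπ X) ?_
    have : ⇑(B ∘ₗ A) ∘ ⇑(csπ X) = ⇑((B ∘ₗ A) ∘ₗ csπ X) := rfl
    rw [this, hBA]
    exact (csπ_surj X).comp hsurj
  have hi2 := OrzechProperty.injective_of_surjective_endomorphism (B ∘ₗ A) hs2
  constructor
  · intro hp
    apply hX
    obtain ⟨s, hs⟩ := Module.projective_lifting_property (csπ X) LinearMap.id (csπ_surj X)
    have h3 : Function.Surjective (csπ X) ∧ ∃ l, l ∘ₗ csι X = LinearMap.id :=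
      (List.TFAE.out (Function.Exact.split_tfae' (cs_exact X)) 0 1).mp
      (show Function.Injective (csι X) ∧ ∃ l, csπ X ∘ₗ l = LinearMap.id from ⟨hinj, s, hs⟩)
    obtain ⟨_, l, hl⟩ := h3
    exact Module.Projective.of_split (csι X) l hl
  · refine ⟨A ∘ₗ (LinearEquiv.ofBijective (B ∘ₗ A) ⟨hi2, hs2⟩).symm.toLinearMap, B, ?_⟩
    ext1 x
    exact (LinearEquiv.ofBijective (B ∘ₗ A) ⟨hi2, hs2⟩).apply_symm_apply x

lemma cs_iter_ret {U : ModuleCat.{0} R} [Module.Finite R U] (hU : ∀ j, EZ R U R (j+1)) (j : ℕ) :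
    ∀ {X : ModuleCat.{0} R} [Module.Finite R X], ¬ Module.Projective R X → Ret X (Om^[j] U) →
    ¬ Module.Projective R (Cs^[j] X) ∧ Ret (Cs^[j] X) U := by
  induction j with
  | zero => intro X _ h1 h2; exact ⟨h1, h2⟩
  | succ j ih =>
    intro X _ h1 h2
    rw [Function.iterate_succ_apply'] at h2
    have := om_iter_finite U j
    obtain ⟨h3, h4⟩ := cs_ret h1 (om_iter_acyc hU j 0) h2
    have := cs_finite X
    exact ih h3 h4

lemma ret_iso {X U : ModuleCat.{0} R} (hU : Indecomp R U) (hX : ¬ Subsingleton X) (h : Ret X U) :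
    Nonempty ((U : Type) ≃ₗ[R] X) := by
  obtain ⟨a, b, hab⟩ := h
  have hs : Function.Surjective b := fun x => ⟨a x, LinearMap.congr_fun hab x⟩
  have h3 := (List.TFAE.out (Function.Exact.split_tfae' (LinearMap.exact_subtype_ker_map b)) 0 2).mp
      (show Function.Injective (LinearMap.ker b).subtype ∧ ∃ l, b ∘ₗ l = LinearMap.id
        from ⟨Subtype.val_injective, a, hab⟩)
  obtain ⟨e, _⟩ := h3
  rcases hU.2 (ModuleCat.of R (LinearMap.ker b)) X ⟨e⟩ with h1 | h1
  · refine ⟨LinearEquiv.ofBijective b ⟨?_, hs⟩⟩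
    rw [← LinearMap.ker_eq_bot]
    exact (Submodule.subsingleton_iff_eq_bot).mp h1
  · exact absurd h1 hX

end Cosyz

end Part8

section Part9
open CategoryTheory Abelian IsLocalRing RingTheory.Sequence
open scoped Pointwise

section Fin1
variable {R : Type} [CommRing R] [IsLocalRing R] [IsNoetherianRing R]

lemma om_om_EZ {V B : ModuleCat.{0} R} [Module.Finite R V] [Module.Finite R B]
    (hV : EZ R V R 1) (h : EZ R (Om V) (Om B) 1) : EZ R V B 1 :=
  EZ.co_right (om_exact B) (omι_inj B) (cov_spec B).1 (EZ.pi hV)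
    (EZ.contra_right (om_exact V) (omι_inj V) (cov_spec V).1 h (EZ.of_projective 1))

lemma om_om_iter_EZ {U B : ModuleCat.{0} R} [Module.Finite R U] [Module.Finite R B]
    (hU : ∀ j, EZ R U R (j+1)) (d : ℕ) (h : EZ R (Om^[d] U) (Om^[d] B : ModuleCat.{0} R) 1) :
    EZ R U B 1 := by
  induction d with
  | zero => exact h
  | succ d ih =>
    rw [Function.iterate_succ_apply', Function.iterate_succ_apply'] at h
    have := om_iter_finite U d
    have := om_iter_finite B d
    exact ih (om_om_EZ (om_iter_acyc hU d 0) h)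

lemma free_of_EZ {U : ModuleCat.{0} R} [Module.Finite R U]
    (h : EZ R U (R ⧸ maximalIdeal R) 1) : Nonempty ((U : Type) ≃ₗ[R] (Fin (cov U).1 → R)) := by
  have h1 : Subsingleton ((Om U : Type) →ₗ[R] (R ⧸ maximalIdeal R)) := by
    refine subsingleton_of_forall_eq 0 fun w => ?_
    obtain ⟨v, rfl⟩ := extend_of_EZ (om_exact U) (omι_inj U) (cov_spec U).1 h w
    ext x
    have hx : omι U x ∈ maximalIdeal R • (⊤ : Submodule R (Fin (cov U).1 → R)) :=
      (cov_spec U).2 (by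
        rw [LinearMap.mem_ker]
        exact (om_exact U).apply_apply_eq_zero x)
    have h2 : v (omι U x) ∈ maximalIdeal R • (⊤ : Submodule R (R ⧸ maximalIdeal R)) := by
      have := Submodule.mem_map_of_mem (f := v) hx
      rw [Submodule.map_smul''] at this
      exact Submodule.smul_mono le_rfl le_top this
    have h3 : maximalIdeal R • (⊤ : Submodule R (R ⧸ maximalIdeal R)) ≤ ⊥ := by
      rw [Submodule.smul_le]
      intro r hr y _
      have := ann_residue (R := R)
      rw [← this, Module.mem_annihilator] at hr
      exact hr y
    exact h3 h2
  have := om_finite U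
  rw [IsSMulRegular.subsingleton_linearMap_iff] at h1
  obtain ⟨r, hr, hreg⟩ := h1
  have hu : IsUnit r := by
    by_contra hu
    have hrm : r ∈ maximalIdeal R := hu
    rw [← ann_residue (R := R), Module.mem_annihilator] at hrm
    have : (1 : R ⧸ maximalIdeal R) = 0 := hreg (by simp only [hrm, smul_zero])
    exact one_ne_zero this
  have hs : Subsingleton (Om U) := subsingleton_of_forall_eq 0 fun x => by
    have := Module.mem_annihilator.mp hr x
    exact hu.smul_eq_zero.mp this
  refine ⟨(LinearEquiv.ofBijective (cov U).2 ⟨?_, (cov_spec U).1⟩).symm⟩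
  rw [← LinearMap.ker_eq_bot, LinearMap.ker_eq_bot']
  intro y hy
  obtain ⟨x, rfl⟩ := (om_exact U y).mp hy
  rw [Subsingleton.elim x 0, map_zero]

lemma iso_R {U : ModuleCat.{0} R} (hU : Indecomp R U) {n : ℕ}
    (e : (U : Type) ≃ₗ[R] (Fin n → R)) : Nonempty ((U : Type) ≃ₗ[R] R) := by
  cases n with
  | zero => exact absurd e.toEquiv.subsingleton hU.1
  | succ n =>
    rcases hU.2 (ModuleCat.of R R) (ModuleCat.of R (Fin n → R))
      ⟨e.trans (Fin.consLinearEquiv R (fun _ : Fin (n+1) => R)).symm⟩ with h | h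
    · exact absurd (show Subsingleton R from h) (not_subsingleton R)
    · cases n with
      | zero => exact ⟨e.trans (LinearEquiv.funUnique (Fin 1) R R)⟩
      | succ n => 
        have h' : Subsingleton (Fin (n+1) → R) := h
        exact absurd h' (not_subsingleton _)

lemma ell_zero {V M : ModuleCat.{0} R} (hV : Module.length R (Ext V M 1) ≠ ⊤) (h : ell V M = 0) :
    EZ R V M 1 := by
  unfold ell at h
  have : Module.length R (Ext V M 1) = 0 := by
    rcases (ENat.toNat_eq_zero).mp (by exact_mod_cast h) with h | h
    · exact h
    · exact absurd h hV
  exact Module.length_eq_zero_iff.mp this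

lemma ell_of_EZ {V M : ModuleCat.{0} R} (h : EZ R V M 1) : ell V M = 0 := by
  have : Module.length R (Ext V M 1) = 0 := Module.length_eq_zero_iff.mpr h
  simp [ell, this]

lemma ell_nonneg (V M : ModuleCat.{0} R) : 0 ≤ ell V M := Int.natCast_nonneg _

end Fin1

end Part9

section Part10
open CategoryTheory Abelian IsLocalRing RingTheory.Sequence
open scoped Pointwise

section Final
variable {R : Type} [CommRing R]

/-- AR relations whose right-hand end is in a given list. -/
def arset (L : List (ModuleCat.{0} R)) : Set (GCM R) :=
  {x | ∃ (X Z Y : CMMod R) (f : (Z.1 : Type) →ₗ[R] (Y.1 : Type))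
    (g : (Y.1 : Type) →ₗ[R] (X.1 : Type)), X.1 ∈ L ∧ IsARSequence R f g ∧
    x = gcls R (FreeAbelianGroup.of X + FreeAbelianGroup.of Z - FreeAbelianGroup.of Y)}

lemma arset_mono {L L' : List (ModuleCat.{0} R)} (h : ∀ x ∈ L, x ∈ L') :
    arset L ⊆ arset L' := by
  rintro x ⟨X, Z, Y, f, g, h1, h2⟩
  exact ⟨X, Z, Y, f, g, h _ h1, h2⟩

lemma ar_finite {x : GCM R} (hx : x ∈ ARCM R) :
    ∃ L : List (ModuleCat.{0} R), x ∈ AddSubgroup.closure (arset L) := by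
  unfold ARCM at hx
  induction hx using AddSubgroup.closure_induction with
  | mem x hx =>
    obtain ⟨X, Z, Y, f, g, h, rfl⟩ := hx
    exact ⟨[X.1], AddSubgroup.subset_closure ⟨X, Z, Y, f, g, by simp, h, rfl⟩⟩
  | zero => exact ⟨[], zero_mem _⟩
  | add x y _ _ hx hy =>
    obtain ⟨L, hL⟩ := hx
    obtain ⟨L', hL'⟩ := hy
    exact ⟨L ++ L', add_mem
      (AddSubgroup.closure_mono (arset_mono fun x h => List.mem_append_left _ h) hL)
      (AddSubgroup.closure_mono (arset_mono fun x h => List.mem_append_right _ h) hL')⟩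
  | neg x _ hx =>
    obtain ⟨L, hL⟩ := hx
    exact ⟨L, neg_mem hL⟩

variable [IsLocalRing R] [IsNoetherianRing R]

lemma phi_kill (V : ModuleCat.{0} R) [Module.Finite R V]
    (hV : ∀ M : ModuleCat.{0} R, Module.Finite R M → Module.length R (Ext V M 1) ≠ ⊤)
    {L : List (ModuleCat.{0} R)}
    (h : ∀ X ∈ L, Module.Finite R X → ¬ Module.Projective R X → ¬ Ret X V ∧ ¬ Ret X (Om V))
    {x : GCM R} (hx : x ∈ AddSubgroup.closure (arset L)) : phi V hV x = 0 := by
  have : AddSubgroup.closure (arset L) ≤ (phi V hV).ker := by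
    rw [AddSubgroup.closure_le]
    rintro x ⟨X, Z, Y, f, g, hXL, har, rfl⟩
    obtain ⟨fA, fB, fC, hf, hg, hfg, -, -, -, -, hX, hlift⟩ := har
    have hnp : ¬ Module.Projective R X.1 := fun hp => hX (Module.free_of_flat_of_isLocalRing)
    obtain ⟨h1, h2⟩ := h X.1 hXL fC hnp
    rw [SetLike.mem_coe, AddMonoidHom.mem_ker, phi_apply]
    have lift : ∀ W : ModuleCat.{0} R, Module.Finite R W → ¬ Ret X.1 W →
        ∀ u : (W : Type) →ₗ[R] X.1, ∃ v, g ∘ₗ v = u := fun W hW hr u =>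
      hlift W u hW fun ⟨s, hs⟩ => hr ⟨s, u, hs⟩
    exact ell_add V hV fA fC hfg hf hg (lift V inferInstance h1) (lift _ (om_finite V) h2)
  exact this hx

theorem final (n : ℕ) (hn : InjDimLE R n (ModuleCat.of R R)) (hsing : IsolatedSingularity R)
    (h : ExCM R = ARCM R) : FiniteCMType R := by
  by_cases hex : ∃ U : ModuleCat.{0} R, IsMCM R U ∧ ¬ Subsingleton U
  swap
  · refine ⟨[], fun U h1 h2 => ?_⟩
    exact absurd ⟨U, h1, h2.1⟩ hex
  obtain ⟨U0, hU0, hU0'⟩ := hex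
  obtain ⟨hR, hacyc⟩ := gor_main hn hU0 hU0'
  obtain ⟨d, hd⟩ := exists_dim (R := R)
  obtain ⟨-, hR | ⟨rs, hjac, hrs, hlen⟩⟩ := hR
  · exact absurd hR (not_subsingleton R)
  have hlen' : rs.length = d := by
    rw [hd] at hlen; exact_mod_cast hlen
  let k : ModuleCat.{0} R := ModuleCat.of R (R ⧸ maximalIdeal R)
  have hk : Module.Finite R k := inferInstanceAs (Module.Finite R (R ⧸ maximalIdeal R))
  have fE := om_iter_finite k d
  have fE1 := om_finite (Om^[d] k)
  have hE : IsMCM R (Om^[d] k) := ⟨fE, Or.inr ⟨rs, hjac, by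
    have := om_iter_depth (M := k) hrs d
    rwa [List.take_of_length_le hlen'.le] at this, hlen⟩⟩
  have hE1 : IsMCM R (Om (Om^[d] k)) := ⟨fE1, Or.inr ⟨rs, hjac, by
    have := om_iter_depth (M := k) hrs (d+1)
    rw [List.take_of_length_le (by omega), Function.iterate_succ_apply'] at this
    exact this, hlen⟩⟩
  have hF : IsMCM R (ModuleCat.of R (Fin (cov (Om^[d] k)).1 → R)) :=
    ⟨inferInstanceAs (Module.Finite R (Fin (cov (Om^[d] k)).1 → R)),
      Or.inr ⟨rs, hjac, wr_pi hrs _, hlen⟩⟩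
  let X : CMMod R := ⟨_, hE⟩
  let Z : CMMod R := ⟨_, hE1⟩
  let Y : CMMod R := ⟨_, hF⟩
  have hmem : gcls R (FreeAbelianGroup.of X + FreeAbelianGroup.of Z - FreeAbelianGroup.of Y) ∈
      ARCM R := by
    rw [← h]
    exact AddSubgroup.subset_closure ⟨X, Z, Y, omι (Om^[d] k), (cov (Om^[d] k)).2, omι_inj _,
      (cov_spec _).1, om_exact _, rfl⟩
  obtain ⟨L, hL⟩ := ar_finite hmem
  refine ⟨ModuleCat.of R R :: (L.map Cs^[d] ++ L.map Cs^[d+1]), fun U hU hUi => ?_⟩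
  by_contra hno
  push Not at hno
  have fU : Module.Finite R U := hU.1
  have hUa : ∀ j, EZ R U R (j+1) := hacyc U hU
  have fV := om_iter_finite U d
  have hret : ∀ j, ∀ X' ∈ L, Module.Finite R X' → ¬ Module.Projective R X' →
      Ret X' (Om^[j] U) → Nonempty ((U : Type) ≃ₗ[R] (Cs^[j] X' : ModuleCat.{0} R)) := by
    intro j X' _ hfin hnp hr
    obtain ⟨h1, h2⟩ := cs_iter_ret hUa j hnp hr
    refine ret_iso hUi (fun hs => h1 ?_) h2
    infer_instance
  have hVl : ∀ M : ModuleCat.{0} R, Module.Finite R M →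
      Module.length R (Ext (Om^[d] U) M 1) ≠ ⊤ := fun M _ => ext_length_ne_top hsing hd U M
  have hphi := phi_kill (Om^[d] U) hVl (L := L) (by
    intro X' hX' hfin hnp
    constructor
    · intro hr
      obtain ⟨e⟩ := hret d X' hX' hfin hnp hr
      exact (hno _ (List.mem_cons_of_mem _ (List.mem_append_left _
        (List.mem_map_of_mem hX')))).false e
    · intro hr
      obtain ⟨e⟩ := hret (d+1) X' hX' hfin hnp (by
        rw [Function.iterate_succ_apply']; exact hr)
      exact (hno _ (List.mem_cons_of_mem _ (List.mem_append_right _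
        (List.mem_map_of_mem hX')))).false e) hL
  rw [phi_apply] at hphi
  have hY : ell (Om^[d] U) Y.1 = 0 := ell_of_EZ (EZ.pi (om_iter_acyc hUa d 0))
  have hX0 : ell (Om^[d] U) X.1 = 0 := by
    have h1 := ell_nonneg (Om^[d] U) X.1
    have h2 := ell_nonneg (Om^[d] U) Z.1
    omega
  have hEZ : EZ R (Om^[d] U) (Om^[d] k : ModuleCat.{0} R) 1 := ell_zero (hVl _ fE) hX0
  obtain ⟨e⟩ := free_of_EZ (om_om_iter_EZ (B := k) hUa d hEZ)
  obtain ⟨e'⟩ := iso_R hUi e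
  exact (hno (ModuleCat.of R R) (List.mem_cons_self)).false e'

end Final

end Part10

/-- Hiramatsu's theorem. Let `(R, m, k)` be a Gorenstein local ring with an
isolated singularity. If `Ex(CM(R)) = AR(CM(R))`, then `R` is of finite CM type. -/
theorem finiteCMType_of_ex_eq_ar_of_gorenstein
    (R : Type) [CommRing R] (hGor : IsGorensteinLocal R) (hsing : IsolatedSingularity R)
    (h : ExCM R = ARCM R) :
    FiniteCMType R := by
  obtain ⟨h1, h2, n, hn⟩ := hGor
  exact final n hn hsing h

end Paper
end

section
/- Let (R, m, k) be a Cohen–Macaulay local ring with an isolated singularity. Then there exists a Cohen–Macaulay R-module X such that stHom_R(M, X) ≠ 0 for every non-free Cohen–Macaulay R-module M. -/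
/-!
Common definitions: Cohen-Macaulay modules, isolated singularities, stable Hom,
syzygies, transposes, Auslander-Reiten sequences, and the Grothendieck-type groups
`G(CM(R))`, `Ex(CM(R))`, `AR(CM(R))` from the paper
"Syzygies of Cohen-Macaulay modules and Grothendieck groups".

Throughout, the maximal ideal of a local ring is realized as the Jacobson radical
`(⊥ : Ideal R).jacobson` (for a local ring these coincide), which lets the definitions
make sense without a `IsLocalRing` instance argument.
-/

namespace Paper

set_option linter.unusedSectionVars false
open CategoryTheory IsLocalRing

section depth
variable (R : Type) [CommRing R] [IsNoetherianRing R] [IsLocalRing R]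

/-- Depth at least `n`, via vanishing of Ext. -/
def Dp (n : ℕ) (M : Type) [AddCommGroup M] [Module R M] : Prop :=
  ∀ i < n, Subsingleton (Abelian.Ext.{0} (ModuleCat.of R (R ⧸ maximalIdeal R)) (ModuleCat.of R M) i)

variable {R}
variable {A B C : Type} [AddCommGroup A] [Module R A] [AddCommGroup B] [Module R B]
  [AddCommGroup C] [Module R C]

lemma Dp.mono {m n : ℕ} (h : m ≤ n) (hA : Dp R n A) : Dp R m A := fun i hi => hA i (by omega)

/-- The short complex. -/
def mkS (f : A →ₗ[R] B) (g : B →ₗ[R] C) (he : Function.Exact f g) : ShortComplex (ModuleCat.{0} R) :=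
  ModuleCat.shortComplexOfCompEqZero f g he.linearMap_comp_eq_zero

lemma mkS_exact (f : A →ₗ[R] B) (g : B →ₗ[R] C) (hf : Function.Injective f)
    (hg : Function.Surjective g) (he : Function.Exact f g) : (mkS f g he).ShortExact where
  exact := ModuleCat.shortComplex_exact _ he
  mono_f := by simpa [mkS, ModuleCat.mono_iff_injective] using! hf
  epi_g := by simpa [mkS, ModuleCat.epi_iff_surjective] using! hg

lemma Dp.right {n : ℕ} (f : A →ₗ[R] B) (g : B →ₗ[R] C) (hf : Function.Injective f)
    (hg : Function.Surjective g) (he : Function.Exact f g) (hA : Dp R (n+1) A) (hB : Dp R n B) :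
    Dp R n C := by
  intro i hi
  have zero1 := AddCommGrpCat.isZero_of_iff_subsingleton.mpr (hB i (by omega))
  have zero2 := AddCommGrpCat.isZero_of_iff_subsingleton.mpr (hA (i + 1) (by omega))
  exact AddCommGrpCat.subsingleton_of_isZero <| ShortComplex.Exact.isZero_of_both_zeros
        ((Abelian.Ext.covariant_sequence_exact₃' _ (mkS_exact f g hf hg he)) i (i + 1) rfl)
        (zero1.eq_zero_of_src _) (zero2.eq_zero_of_tgt _)

lemma Dp.mid {n : ℕ} (f : A →ₗ[R] B) (g : B →ₗ[R] C) (hf : Function.Injective f)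
    (hg : Function.Surjective g) (he : Function.Exact f g) (hA : Dp R n A) (hC : Dp R n C) :
    Dp R n B := by
  intro i hi
  have zero1 := AddCommGrpCat.isZero_of_iff_subsingleton.mpr (hA i (by omega))
  have zero2 := AddCommGrpCat.isZero_of_iff_subsingleton.mpr (hC i (by omega))
  exact AddCommGrpCat.subsingleton_of_isZero <| ShortComplex.Exact.isZero_of_both_zeros
        ((Abelian.Ext.covariant_sequence_exact₂' _ (mkS_exact f g hf hg he)) i)
        (zero1.eq_zero_of_src _) (zero2.eq_zero_of_tgt _)

lemma Dp.left {n : ℕ} (f : A →ₗ[R] B) (g : B →ₗ[R] C) (hf : Function.Injective f)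
    (hg : Function.Surjective g) (he : Function.Exact f g) (hB : Dp R (n+1) B) (hC : Dp R n C) :
    Dp R (n+1) A := by
  intro i hi
  have zero1 := AddCommGrpCat.isZero_of_iff_subsingleton.mpr (hB i (by omega))
  match i with
  | 0 =>
    have h0 : Subsingleton (ModuleCat.of R (R ⧸ maximalIdeal R) ⟶ ModuleCat.of R B) :=
      Abelian.Ext.addEquiv₀.subsingleton_congr.mp (hB 0 (by omega))
    have h1 : Subsingleton ((R ⧸ maximalIdeal R) →ₗ[R] B) :=
      (ModuleCat.homAddEquiv (M := ModuleCat.of R (R ⧸ maximalIdeal R))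
        (N := ModuleCat.of R B)).symm.subsingleton
    have h2 : Subsingleton ((R ⧸ maximalIdeal R) →ₗ[R] A) := by
      refine ⟨fun a b => ?_⟩
      have := Subsingleton.elim (f ∘ₗ a) (f ∘ₗ b)
      ext
      apply hf
      exact LinearMap.congr_fun this _
    exact (Abelian.Ext.addEquiv₀.trans ModuleCat.homAddEquiv).subsingleton
  | i + 1 =>
  have zero2 := AddCommGrpCat.isZero_of_iff_subsingleton.mpr (hC i (by omega))
  exact AddCommGrpCat.subsingleton_of_isZero <| ShortComplex.Exact.isZero_of_both_zeros
        ((Abelian.Ext.covariant_sequence_exact₁' _ (mkS_exact f g hf hg he)) i (i + 1) rfl)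
        (zero2.eq_zero_of_src _) (zero1.eq_zero_of_tgt _)

lemma Dp.of_subsingleton (n : ℕ) [Subsingleton A] : Dp R n A := by
  intro i hi
  have : Limits.IsZero (ModuleCat.of R A) := ModuleCat.isZero_of_subsingleton _
  refine ⟨fun a b => ?_⟩
  rw [← Abelian.Ext.comp_mk₀_id a, ← Abelian.Ext.comp_mk₀_id b, this.eq_zero_of_src (𝟙 _)]
  simp

lemma Dp.free {n : ℕ} (h : Dp R n R) (m : ℕ) : Dp R n (Fin m → R) := by
  induction m with
  | zero => exact Dp.of_subsingleton n
  | succ m ih =>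
    refine Dp.mid (A := R) (C := Fin m → R) (LinearMap.single R (fun _ => R) 0)
      (LinearMap.funLeft R R Fin.succ) ?_ ?_ ?_ h ih
    · intro a b hab
      simpa using congrFun hab 0
    · exact LinearMap.funLeft_surjective_of_injective R R _ (Fin.succ_injective m)
    · intro v
      constructor
      · intro hv
        refine ⟨v 0, ?_⟩
        ext i
        refine Fin.cases ?_ (fun j => ?_) i
        · simp
        · have := congrFun hv j
          simp [LinearMap.funLeft] at this
          simp [this]
      · rintro ⟨a, rfl⟩
        ext j
        simp [LinearMap.funLeft]

lemma suppk : Module.support R (ModuleCat.of R (R ⧸ maximalIdeal R)) =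
    PrimeSpectrum.zeroLocus (maximalIdeal R) := by
  rw [Module.support_eq_zeroLocus]
  change PrimeSpectrum.zeroLocus (Module.annihilator R (R ⧸ maximalIdeal R) : Set R) = _
  rw [Ideal.annihilator_quotient]

lemma smul_lt [Module.Finite R A] [Nontrivial A] : maximalIdeal R • (⊤ : Submodule R A) < ⊤ := by
  rw [lt_top_iff_ne_top]
  intro h
  exact Submodule.top_ne_ideal_smul_of_le_jacobson_annihilator
    (le_trans (maximalIdeal_le_jacobson _) le_rfl) h.symm

lemma Dp.of_regular [Module.Finite R A] (rs : List R) (hm : ∀ x ∈ rs, x ∈ maximalIdeal R)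
    (h : RingTheory.Sequence.IsWeaklyRegular A rs) : Dp R rs.length A := by
  rcases subsingleton_or_nontrivial A with _ | _
  · exact Dp.of_subsingleton _
  · exact ModuleCat.subsingleton_ext_of_exists_isRegular (maximalIdeal R) _ suppk.le
      (ModuleCat.of R A) (smul_lt (A := A)) rs hm
      ((IsLocalRing.isRegular_iff_isWeaklyRegular_of_subset_maximalIdeal hm).2 h)

lemma Dp.exists_regular [Module.Finite R A] [Nontrivial A] {n : ℕ} (h : Dp R n A) :
    ∃ rs : List R, rs.length = n ∧ (∀ x ∈ rs, x ∈ maximalIdeal R) ∧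
      RingTheory.Sequence.IsWeaklyRegular A rs := by
  obtain ⟨rs, h1, h2, h3⟩ := ModuleCat.exists_isRegular_of_exists_subsingleton_ext (maximalIdeal R) n
    (ModuleCat.of R A) (smul_lt (A := A)) _ suppk h
  exact ⟨rs, h1, h2, h3.1⟩

open Pointwise in
lemma ass_step [Module.Finite R A] {p : Ideal R} (hp : IsAssociatedPrime p A) {x : R}
    (hx : x ∈ maximalIdeal R) (hr : IsSMulRegular A x) :
    ∃ q, IsAssociatedPrime q (QuotSMulTop x A) ∧ p < q := by
  have hpp := hp.1
  obtain ⟨_, y0, hy0⟩ := isAssociatedPrime_iff.1 hp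
  let L : Submodule R A := Submodule.torsionBySet R A (p : Set R)
  have hL : ∀ y, y ∈ L ↔ ∀ a ∈ p, a • y = 0 := by
    intro y; simp [L, Submodule.mem_torsionBySet_iff]
  have hy0' : ∀ a, a ∈ p ↔ a • y0 = 0 := by
    intro a; rw [hy0]; simp [Submodule.mem_colon_singleton]
  have hy0L : y0 ∈ L := (hL _).2 fun a ha => (hy0' a).1 ha
  have hne : y0 ≠ 0 := by
    rintro rfl
    exact hpp.ne_top ((Ideal.eq_top_iff_one _).2 ((hy0' 1).2 (by simp)))
  have hxp : x ∉ p := fun h => hne (hr (by simpa using (hy0' x).1 h))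
  have : ∃ y ∈ L, y ∉ x • (⊤ : Submodule R A) := by
    by_contra hcon
    push Not at hcon
    have : L ≤ maximalIdeal R • L := by
      intro y hy
      obtain ⟨z, -, rfl⟩ := (Submodule.mem_smul_pointwise_iff_exists _ _ _).1 (hcon y hy)
      refine Submodule.smul_mem_smul hx ((hL _).2 fun a ha => hr ?_)
      simp only [smul_zero]
      rw [smul_comm]
      exact (hL _).1 hy a ha
    have := Submodule.eq_bot_of_le_smul_of_le_jacobson_bot _ L (IsNoetherian.noetherian L) this
      (maximalIdeal_le_jacobson _)
    rw [this] at hy0L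
    exact hne (by simpa using hy0L)
  obtain ⟨y, hyL, hy⟩ := this
  have hyne : (Submodule.Quotient.mk y : QuotSMulTop x A) ≠ 0 := by
    rwa [Ne, Submodule.Quotient.mk_eq_zero]
  obtain ⟨q, hq, hle⟩ := exists_le_isAssociatedPrime_of_isNoetherianRing R _ hyne
  refine ⟨q, hq, lt_of_le_of_ne ?_ ?_⟩
  · intro a ha
    apply hle
    rw [Submodule.mem_colon_singleton, ← Submodule.Quotient.mk_smul, (hL y).1 hyL a ha]
    simp
  · rintro rfl
    apply hxp
    apply hle
    rw [Submodule.mem_colon_singleton, ← Submodule.Quotient.mk_smul, Submodule.mem_bot,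
      Submodule.Quotient.mk_eq_zero]
    exact Submodule.smul_mem_pointwise_smul _ _ _ trivial

lemma ass_height (rs : List R) (hm : ∀ x ∈ rs, x ∈ maximalIdeal R) : ∀ (A : Type) [AddCommGroup A]
    [Module R A] [Module.Finite R A] (_ : RingTheory.Sequence.IsWeaklyRegular A rs)
    (p : Ideal R) (_ : IsAssociatedPrime p A), p.height + rs.length ≤ (maximalIdeal R).height := by
  induction rs with
  | nil =>
    intro A _ _ _ h p hp
    have := hp.1
    simpa using Ideal.height_mono (IsLocalRing.le_maximalIdeal this.ne_top)
  | cons x rs ih =>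
    intro A _ _ _ h p hp
    rw [RingTheory.Sequence.isWeaklyRegular_cons_iff] at h
    obtain ⟨q, hq, hlt⟩ := ass_step hp (hm x (by simp)) h.1
    have h1 := ih (fun y hy => hm y (by simp [hy])) _ h.2 q hq
    have := hp.1
    have := hq.1
    have h2 : p.height + 1 ≤ q.height := by
      exact Ideal.height_add_one_le_of_lt_of_isPrime hlt
    calc p.height + ((x :: rs).length : ℕ∞) = p.height + 1 + rs.length := by
          simp only [List.length_cons]; push_cast; ring
      _ ≤ _ := le_trans (by gcongr) h1

lemma Dp.ass_height [Module.Finite R A] {n : ℕ} (h : Dp R n A) {p : Ideal R}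
    (hp : IsAssociatedPrime p A) : p.height + n ≤ (maximalIdeal R).height := by
  rcases subsingleton_or_nontrivial A with _ | _
  · exact absurd hp not_isAssociatedPrime_of_subsingleton
  obtain ⟨rs, rfl, h2, h3⟩ := h.exists_regular
  exact Paper.ass_height rs h2 A h3 p hp

end depth
set_option linter.unusedSectionVars false
open CategoryTheory IsLocalRing

section stable
variable (R : Type) [CommRing R]

/-- Every map factors through a finite free module. -/
def SZ (N X : Type) [AddCommGroup N] [Module R N] [AddCommGroup X] [Module R X] : Prop :=
  ∀ f : N →ₗ[R] X, ∃ (n : ℕ) (g : N →ₗ[R] (Fin n → R)) (h : (Fin n → R) →ₗ[R] X), f = h ∘ₗ g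

/-- A multiple of the identity by an element outside `p` factors through a free module. -/
def LF (p : Ideal R) (N : Type) [AddCommGroup N] [Module R N] : Prop :=
  ∃ s, s ∉ p ∧ ∃ (n : ℕ) (g : N →ₗ[R] (Fin n → R)) (h : (Fin n → R) →ₗ[R] N),
    h ∘ₗ g = s • LinearMap.id

/-- `P` is an `n`-th syzygy. -/
inductive Syz : ℕ → (P : Type) → [AddCommGroup P] → [Module R P] → Prop
  | zero (P : Type) [AddCommGroup P] [Module R P] : Module.Finite R P → Syz 0 P
  | succ (n : ℕ) (P F C : Type) [AddCommGroup P] [Module R P] [AddCommGroup F] [Module R F]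
    [AddCommGroup C] [Module R C]
    (f : P →ₗ[R] F) (g : F →ₗ[R] C) : Module.Finite R P → Module.Free R F → Module.Finite R F →
      Function.Injective f → Function.Surjective g → Function.Exact f g → Syz n C → Syz (n+1) P

variable {R}
variable {N X Y C : Type} [AddCommGroup N] [Module R N] [AddCommGroup X] [Module R X]
  [AddCommGroup Y] [Module R Y] [AddCommGroup C] [Module R C]

lemma SZ.lift (h : SZ R N X) {F : Type} [AddCommGroup F] [Module R F] (π : F →ₗ[R] X)
    (hπ : Function.Surjective π) (f : N →ₗ[R] X) : ∃ g : N →ₗ[R] F, π ∘ₗ g = f := by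
  obtain ⟨n, g, k, rfl⟩ := h f
  obtain ⟨l, hl⟩ := Module.projective_lifting_property π k hπ
  exact ⟨l ∘ₗ g, by rw [← hl]; rfl⟩

lemma SZ_of_top [Module.Finite R X] (h : stSub R N X = ⊤) : SZ R N X := by
  obtain ⟨n, π, hπ⟩ := Module.Finite.exists_fin' R X
  intro f
  have hle : stSub R N X ≤ LinearMap.range
      (LinearMap.llcomp R N (Fin n → R) X π : (N →ₗ[R] (Fin n → R)) →ₗ[R] (N →ₗ[R] X)) := by
    rw [stSub, Submodule.span_le]
    rintro _ ⟨m, g, k, rfl⟩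
    obtain ⟨l, hl⟩ := Module.projective_lifting_property π k hπ
    exact ⟨l ∘ₗ g, by rw [← hl]; rfl⟩
  obtain ⟨g, hg⟩ := hle (h ▸ Submodule.mem_top : f ∈ stSub R N X)
  exact ⟨n, g, π, hg.symm⟩

/-- descend along a surjection -/
lemma descend {F Z : Type} [AddCommGroup F] [Module R F] [AddCommGroup Z] [Module R Z]
    {φ : N →ₗ[R] F} {ψ : F →ₗ[R] C} (hψ : Function.Surjective ψ) (he : Function.Exact φ ψ)
    (u : F →ₗ[R] Z) (hu : u ∘ₗ φ = 0) : ∃ v : C →ₗ[R] Z, v ∘ₗ ψ = u := by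
  have hk : LinearMap.ker ψ ≤ LinearMap.ker u := by
    rw [he.linearMap_ker_eq]
    rintro _ ⟨y, rfl⟩
    exact LinearMap.congr_fun hu y
  refine ⟨(LinearMap.ker ψ).liftQ u hk ∘ₗ (ψ.quotKerEquivOfSurjective hψ).symm.toLinearMap, ?_⟩
  ext x
  have : (ψ.quotKerEquivOfSurjective hψ).symm (ψ x) = Submodule.Quotient.mk x := by
    rw [LinearEquiv.symm_apply_eq]; rfl
  simp [this]

/-- left approximations -/
def LA {n : ℕ} (φ : N →ₗ[R] (Fin n → R)) : Prop :=
  ∀ (m : ℕ) (g : N →ₗ[R] (Fin m → R)), ∃ g' : (Fin n → R) →ₗ[R] (Fin m → R), g' ∘ₗ φ = g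

lemma exists_LA [IsNoetherianRing R] [Module.Finite R N] :
    ∃ (n : ℕ) (φ : N →ₗ[R] (Fin n → R)), LA φ := by
  have : Module.Finite R (N →ₗ[R] R) := inferInstance
  obtain ⟨n, π, hπ⟩ := Module.Finite.exists_fin' R (N →ₗ[R] R)
  refine ⟨n, LinearMap.pi fun i => π (Pi.single i 1), fun m g => ?_⟩
  choose c hc using fun j : Fin m => hπ (LinearMap.proj j ∘ₗ g)
  refine ⟨LinearMap.pi fun j => ∑ i, c j i • LinearMap.proj i, ?_⟩
  ext y j
  have := LinearMap.congr_fun (hc j) y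
  rw [pi_eq_sum_univ' (c j)] at this
  simp only [map_sum, map_smul, LinearMap.sum_apply, LinearMap.smul_apply] at this
  simpa using this

variable {n : ℕ} {φ : N →ₗ[R] (Fin n → R)} {ψ : (Fin n → R) →ₗ[R] C}

lemma LF.step {p : Ideal R} (hφ : LA φ) (hψ : Function.Surjective ψ) (he : Function.Exact φ ψ)
    (h : LF R p N) : LF R p C := by
  obtain ⟨s, hs, m, g, k, hgk⟩ := h
  obtain ⟨g', rfl⟩ := hφ m g
  obtain ⟨v, hv⟩ := descend hψ he (s • LinearMap.id - φ ∘ₗ k ∘ₗ g') (by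
    ext1 y
    have := LinearMap.congr_fun hgk y
    simp only [LinearMap.comp_apply, LinearMap.smul_apply, LinearMap.id_apply] at this
    simp [this])
  refine ⟨s, hs, n, v, ψ, ?_⟩
  ext c
  obtain ⟨x, rfl⟩ := hψ c
  have := LinearMap.congr_fun hv x
  simp only [LinearMap.comp_apply] at this
  simp [this, he.apply_apply_eq_zero]

lemma SZ.step (hφ : LA φ) (hψ : Function.Surjective ψ) (he : Function.Exact φ ψ)
    {m : ℕ} {ι : Y →ₗ[R] (Fin m → R)} {π : (Fin m → R) →ₗ[R] X}
    (hι : Function.Injective ι) (hπ : Function.Surjective π) (he' : Function.Exact ι π)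
    (h : SZ R N Y) : SZ R C X := by
  intro f
  obtain ⟨g, hg⟩ := Module.projective_lifting_property π (f ∘ₗ ψ) hπ
  have hmem : ∀ y, g (φ y) ∈ LinearMap.range ι := by
    intro y
    have := LinearMap.congr_fun hg (φ y)
    simp only [LinearMap.comp_apply, he.apply_apply_eq_zero, map_zero] at this
    exact (he' _).1 this
  let e := LinearEquiv.ofInjective ι hι
  let u : N →ₗ[R] Y := e.symm.toLinearMap ∘ₗ (g ∘ₗ φ).codRestrict _ hmem
  have hu : ∀ y, ι (u y) = g (φ y) := by
    intro y
    have : e (u y) = ⟨g (φ y), hmem y⟩ := by simp [u]; rfl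
    exact congrArg Subtype.val this
  obtain ⟨l, a, b, hab⟩ := h u
  obtain ⟨a', rfl⟩ := hφ l a
  obtain ⟨v, hv⟩ := descend hψ he (g - ι ∘ₗ b ∘ₗ a') (by
    ext1 y
    have := LinearMap.congr_fun hab y
    simp only [LinearMap.comp_apply] at this
    simp [← this, hu])
  refine ⟨m, v, π, ?_⟩
  ext c
  obtain ⟨x, rfl⟩ := hψ c
  have h1 := LinearMap.congr_fun hv x
  have h2 := LinearMap.congr_fun hg x
  simp only [LinearMap.comp_apply] at h1 h2
  simp [h1, h2, he'.apply_apply_eq_zero]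

lemma proj_step (hi : Function.Injective φ) (hψ : Function.Surjective ψ) (he : Function.Exact φ ψ)
    (h : Module.Projective R C) : Module.Projective R N := by
  obtain ⟨σ, hσ⟩ := Module.projective_lifting_property ψ LinearMap.id hψ
  have hmem : ∀ v, v - σ (ψ v) ∈ LinearMap.range φ := by
    intro v
    have := LinearMap.congr_fun hσ (ψ v)
    simp only [LinearMap.comp_apply, LinearMap.id_apply] at this
    exact (he _).1 (by simp [this])
  let e := LinearEquiv.ofInjective φ hi
  refine Module.Projective.of_split φ
    (e.symm.toLinearMap ∘ₗ (LinearMap.id - σ ∘ₗ ψ).codRestrict _ hmem) ?_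
  ext y
  simp only [LinearMap.comp_apply, LinearEquiv.coe_coe, LinearMap.id_apply]
  rw [LinearEquiv.symm_apply_eq]
  apply Subtype.ext
  simp [e, he.apply_apply_eq_zero]

lemma base [IsNoetherianRing R] [IsLocalRing R] [Module.Finite R N]
    (h : SZ R N (R ⧸ maximalIdeal R)) : Module.Projective R N := by
  let V := N ⧸ (maximalIdeal R • ⊤ : Submodule R N)
  let q : N →ₗ[R] V := (maximalIdeal R • ⊤ : Submodule R N).mkQ
  let _ : Field (R ⧸ maximalIdeal R) := Ideal.Quotient.field _
  have : Module.Finite (R ⧸ maximalIdeal R) V := Module.Finite.of_restrictScalars_finite R _ _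
  let b := Module.finBasis (R ⧸ maximalIdeal R) V
  let n := Module.finrank (R ⧸ maximalIdeal R) V
  let e : V ≃ₗ[R] (Fin n → (R ⧸ maximalIdeal R)) := b.equivFun.restrictScalars R
  let mk : R →ₗ[R] (R ⧸ maximalIdeal R) := (maximalIdeal R).mkQ
  have hmk : Function.Surjective mk := Submodule.mkQ_surjective _
  choose g hg using fun i : Fin n => h.lift mk hmk (LinearMap.proj i ∘ₗ e.toLinearMap ∘ₗ q)
  let f : N →ₗ[R] (Fin n → R) := LinearMap.pi g
  let π : (Fin n → R) →ₗ[R] V := e.symm.toLinearMap ∘ₗ LinearMap.pi fun i => mk ∘ₗ LinearMap.proj i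
  have hf : π ∘ₗ f = q := by
    ext1 y
    simp only [π, LinearMap.comp_apply, LinearEquiv.coe_coe]
    rw [LinearEquiv.symm_apply_eq]
    ext1 i
    simpa [f] using LinearMap.congr_fun (hg i) y
  obtain ⟨α, hα⟩ := Module.projective_lifting_property q π (Submodule.mkQ_surjective _)
  have hq : ∀ y, q (α (f y)) = q y := by
    intro y
    have h1 := LinearMap.congr_fun hα (f y)
    have h2 := LinearMap.congr_fun hf y
    simp only [LinearMap.comp_apply] at h1 h2
    rw [h1, h2]
  have hs : Function.Surjective (α ∘ₗ f) := by
    rw [← LinearMap.range_eq_top, eq_top_iff]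
    refine Submodule.le_of_le_smul_of_le_jacobson_bot (I := maximalIdeal R) Module.Finite.fg_top
      (maximalIdeal_le_jacobson _) ?_
    intro y _
    have : y - α (f y) ∈ (maximalIdeal R • ⊤ : Submodule R N) := by
      rw [← Submodule.Quotient.mk_eq_zero]
      change q _ = 0
      rw [map_sub, hq, sub_self]
    rw [← add_sub_cancel (α (f y)) y]
    exact Submodule.add_mem_sup ⟨y, rfl⟩ this
  have hinj := OrzechProperty.injective_of_surjective_endomorphism _ hs
  let u := LinearEquiv.ofBijective _ ⟨hinj, hs⟩
  refine Module.Projective.of_split f (u.symm.toLinearMap ∘ₗ α) ?_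
  ext y
  simp only [LinearMap.comp_apply, LinearEquiv.coe_coe, LinearMap.id_apply]
  rw [LinearEquiv.symm_apply_eq]
  rfl

end stable
set_option linter.unusedSectionVars false
open IsLocalRing
open scoped Pointwise

section regular

/-- regular of dimension n -/
def Reg (n : ℕ) (A : Type) [CommRing A] [IsLocalRing A] : Prop :=
  (∃ s : Fin n → A, Ideal.span (Set.range s) = maximalIdeal A) ∧ (n : WithBot ℕ∞) ≤ ringKrullDim A

variable {A : Type} [CommRing A] [IsLocalRing A] [IsNoetherianRing A]

lemma Reg.exists_mem {n : ℕ} (h : Reg (n+1) A) :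
    ∃ x ∈ maximalIdeal A, x ∉ maximalIdeal A ^ 2 ∧ ∀ q ∈ minimalPrimes A, x ∉ q := by
  classical
  have hht : (maximalIdeal A).height ≠ 0 := by
    intro h0
    have h1 := h.2
    rw [← maximalIdeal_height_eq_ringKrullDim, h0] at h1
    have : ((n+1 : ℕ) : WithBot ℕ∞) ≤ ((0 : ℕ) : WithBot ℕ∞) := by simp at h1
    have := Nat.cast_le.1 this
    omega
  have hfin := minimalPrimes.finite_of_isNoetherianRing A
  by_contra hcon
  push Not at hcon
  have := (Ideal.subset_union_prime (s := insert (maximalIdeal A ^ 2) hfin.toFinset) (f := id)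
    (maximalIdeal A ^ 2) (maximalIdeal A ^ 2) (by
      intro i hi hi' _
      rw [Finset.mem_insert, hfin.mem_toFinset] at hi
      exact (hi.resolve_left hi').1.1) (I := maximalIdeal A)).1 (by
      intro x hx
      by_cases h2 : x ∈ maximalIdeal A ^ 2
      · simp only [Set.mem_iUnion]
        exact ⟨maximalIdeal A ^ 2, by simp, h2⟩
      · obtain ⟨q, hq, hxq⟩ := hcon x hx h2
        simp only [Set.mem_iUnion]
        exact ⟨q, by simp [hq], hxq⟩)
  obtain ⟨i, hi, hle⟩ := this
  rw [Finset.mem_insert, hfin.mem_toFinset] at hi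
  rcases hi with rfl | hi
  · have : maximalIdeal A = ⊥ :=
      Submodule.eq_bot_of_le_smul_of_le_jacobson_bot (maximalIdeal A) _
        (IsNoetherian.noetherian _) (by simpa [sq] using hle) (maximalIdeal_le_jacobson _)
    rw [this] at hht
    exact hht Ideal.height_bot
  · have hp : i.IsPrime := hi.1.1
    have : i = maximalIdeal A := le_antisymm (le_maximalIdeal hp.ne_top) hle
    rw [this] at hi
    exact hht ((Ideal.height_eq_zero_iff).2 hi)

lemma isLocal_quot {x : A} (hx : x ∈ maximalIdeal A) : IsLocalRing (A ⧸ Ideal.span {x}) := by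
  have : Nontrivial (A ⧸ Ideal.span {x}) := Ideal.Quotient.nontrivial_iff.2 (by
    intro h
    have : Ideal.span {x} ≤ maximalIdeal A := by simpa [Ideal.span_le] using hx
    exact (Ideal.IsPrime.ne_top inferInstance) (top_le_iff.1 (h ▸ this)))
  exact IsLocalRing.of_surjective' (Ideal.Quotient.mk _) Ideal.Quotient.mk_surjective

lemma map_max_quot (x : A) [IsLocalRing (A ⧸ Ideal.span {x})] :
    (maximalIdeal A).map (Ideal.Quotient.mk (Ideal.span {x})) = maximalIdeal (A ⧸ Ideal.span {x}) := by
  have h1 := Ideal.comap_isMaximal_of_surjective (Ideal.Quotient.mk (Ideal.span {x}))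
    Ideal.Quotient.mk_surjective (K := maximalIdeal (A ⧸ Ideal.span {x}))
  rw [← eq_maximalIdeal h1, Ideal.map_comap_of_surjective _ Ideal.Quotient.mk_surjective]

lemma Reg.quot {n : ℕ} (h : Reg (n+1) A) {x : A} (hx : x ∈ maximalIdeal A)
    (hx2 : x ∉ maximalIdeal A ^ 2) [IsLocalRing (A ⧸ Ideal.span {x})] :
    Reg n (A ⧸ Ideal.span {x}) := by
  obtain ⟨⟨s, hs⟩, hd⟩ := h
  constructor
  · have hx' := hx
    rw [← hs] at hx'
    obtain ⟨c, hc⟩ := (Submodule.mem_span_range_iff_exists_fun A).1 hx'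
    have hsm : ∀ i, s i ∈ maximalIdeal A := fun i => hs ▸ Ideal.subset_span ⟨i, rfl⟩
    have : ∃ j, c j ∉ maximalIdeal A := by
      by_contra hcon
      push Not at hcon
      apply hx2
      rw [← hc, sq]
      exact Ideal.sum_mem _ fun i _ => Ideal.mul_mem_mul (hcon i) (hsm i)
    obtain ⟨j, hj⟩ := this
    have hu : IsUnit (c j) := by simpa using hj
    refine ⟨fun i => Ideal.Quotient.mk _ (s (j.succAbove i)), ?_⟩
    apply le_antisymm
    · rw [Ideal.span_le]
      rintro _ ⟨i, rfl⟩
      rw [← map_max_quot]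
      exact Ideal.mem_map_of_mem _ (hsm _)
    · rw [← map_max_quot, ← hs, Ideal.map_span, Ideal.span_le]
      rintro _ ⟨_, ⟨i, rfl⟩, rfl⟩
      have key : ∀ i, Ideal.Quotient.mk (Ideal.span {x}) (s (j.succAbove i)) ∈ Ideal.span
        (Set.range fun i => Ideal.Quotient.mk (Ideal.span {x}) (s (j.succAbove i))) :=
        fun i => Ideal.subset_span ⟨i, rfl⟩
      rcases Fin.eq_self_or_eq_succAbove j i with rfl | ⟨i, rfl⟩
      · have h0 : Ideal.Quotient.mk (Ideal.span {x}) (∑ i, c i • s i) = 0 :=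
          Ideal.Quotient.eq_zero_iff_mem.2 (by rw [hc]; exact Ideal.mem_span_singleton_self x)
        rw [Fin.sum_univ_succAbove _ i, map_add, smul_eq_mul, map_mul] at h0
        have h1 := eq_neg_of_add_eq_zero_left h0
        have hu' := hu.map (Ideal.Quotient.mk (Ideal.span {x}))
        refine (Ideal.unit_mul_mem_iff_mem _ hu').1 ?_
        rw [h1, map_sum]
        refine neg_mem (Ideal.sum_mem _ fun k _ => ?_)
        rw [smul_eq_mul, map_mul]
        exact Ideal.mul_mem_left _ _ (key k)
      · exact key i
  · have h1 := hd.trans (ringKrullDim_le_ringKrullDim_quotSMulTop_succ hx)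
    have h2 : x • (⊤ : Ideal A) = Ideal.span {x} := by simp [← Submodule.ideal_span_singleton_smul]
    rw [h2, ← maximalIdeal_height_eq_ringKrullDim] at h1
    rw [← maximalIdeal_height_eq_ringKrullDim]
    have h3 : ((n+1 : ℕ) : ℕ∞) ≤ (maximalIdeal (A ⧸ Ideal.span {x})).height + 1 := by exact_mod_cast h1
    have h4 : (n : ℕ∞) ≤ (maximalIdeal (A ⧸ Ideal.span {x})).height := by
      push_cast at h3
      exact (ENat.add_le_add_iff_right (by simp)).1 h3
    exact_mod_cast h4

lemma Reg.max_bot (h : Reg 0 A) : maximalIdeal A = ⊥ := by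
  obtain ⟨⟨s, hs⟩, _⟩ := h
  rw [← hs]
  simp

lemma Reg.isDomain {n : ℕ} : ∀ {A : Type} [CommRing A] [IsLocalRing A] [IsNoetherianRing A],
    Reg n A → IsDomain A := by
  induction n with
  | zero =>
    intro A _ _ _ h
    have : (⊥ : Ideal A).IsPrime := h.max_bot ▸ inferInstance
    exact IsDomain.of_bot_isPrime A
  | succ n ih =>
    intro A _ _ _ h
    obtain ⟨x, hx, hx2, hq⟩ := h.exists_mem
    have := isLocal_quot hx
    have hdom := ih (h.quot hx hx2)
    have hp : (Ideal.span {x}).IsPrime := (Ideal.Quotient.isDomain_iff_prime _).1 hdom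
    obtain ⟨q, hqm, hqx⟩ := Ideal.exists_minimalPrimes_le (I := ⊥) (J := Ideal.span {x}) bot_le
    have hqp : q.IsPrime := hqm.1.1
    have hb : q = ⊥ := by
      refine Submodule.eq_bot_of_le_smul_of_le_jacobson_bot (maximalIdeal A) _
        (IsNoetherian.noetherian _) ?_ (maximalIdeal_le_jacobson _)
      intro y hy
      obtain ⟨z, rfl⟩ := Ideal.mem_span_singleton.1 (hqx hy)
      exact Ideal.mul_mem_mul hx ((hqp.mem_or_mem hy).resolve_left (hq q hqm))
    rw [hb] at hqp
    exact IsDomain.of_bot_isPrime A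
end regular
section syzreg
variable {A : Type} [CommRing A]

lemma Syz.finite {n : ℕ} {P : Type} [AddCommGroup P] [Module A P] (h : Syz A n P) :
    Module.Finite A P := by
  cases h <;> assumption

lemma Syz.mono {n : ℕ} : ∀ {m : ℕ} {P : Type} [AddCommGroup P] [Module A P], m ≤ n →
    Syz A n P → Syz A m P := by
  induction n with
  | zero => 
    intro m P _ _ hm h
    obtain rfl : m = 0 := by omega
    exact h
  | succ n ih =>
    intro m P _ _ hm h
    have := h.finite
    cases m with
    | zero => exact Syz.zero P this
    | succ m =>
      cases h with
      | succ _ _ F C f g h1 h2 h3 h4 h5 h6 h7 =>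
        exact Syz.succ m P F C f g h1 h2 h3 h4 h5 h6 (ih (by omega) h7)

lemma Syz.regular {n : ℕ} {P : Type} [AddCommGroup P] [Module A P] (h : Syz A (n+1) P) {x : A}
    (hx : IsSMulRegular A x) : IsSMulRegular P x := by
  cases h with
  | succ _ _ F C f g h1 h2 h3 h4 h5 h6 h7 =>
    refine IsSMulRegular.of_injective (N := F) f h4 ?_
    exact Module.Flat.isSMulRegular_of_isRegular (isLeftRegular_iff_isRegular.1 hx)

lemma Syz.quot {n : ℕ} {x : A} (hx : IsSMulRegular A x) :
    ∀ {P : Type} [AddCommGroup P] [Module A P], Syz A (n+1) P →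
    Syz (A ⧸ Ideal.span {x}) n (QuotSMulTop x P) := by
  have hs : Function.Surjective (algebraMap A (A ⧸ Ideal.span {x})) := Ideal.Quotient.mk_surjective
  induction n with
  | zero =>
    intro P _ _ h
    have := h.finite
    exact Syz.zero _ (Module.Finite.of_restrictScalars_finite A _ _)
  | succ n ih =>
    intro P _ _ h
    cases h with
    | succ _ _ F C f g h1 h2 h3 h4 h5 h6 h7 =>
      have hreg := h7.regular hx
      have e1 : Function.Exact (0 : PUnit.{1} →ₗ[A] P) f := by
        rw [LinearMap.exact_zero_iff_injective]; exact h4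
      have e2 := QuotSMulTop.map_first_exact_on_four_term_exact_of_isSMulRegular_last e1 h6 hreg
      rw [map_zero, LinearMap.exact_zero_iff_injective] at e2
      exact Syz.succ n _ (QuotSMulTop x F) (QuotSMulTop x C)
        ((QuotSMulTop.map x f).extendScalarsOfSurjective hs)
        ((QuotSMulTop.map x g).extendScalarsOfSurjective hs)
        (Module.Finite.of_restrictScalars_finite A _ _) inferInstance
        (Module.Finite.of_restrictScalars_finite A _ _) e2 (QuotSMulTop.map_surjective x h5)
        (QuotSMulTop.map_exact x h6 h5) (ih h7)

lemma Reg.free {n : ℕ} : ∀ {A : Type} [CommRing A] [IsLocalRing A] [IsNoetherianRing A]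
    {P : Type} [AddCommGroup P] [Module A P], Reg n A → Syz A n P → Module.Free A P := by
  induction n with
  | zero =>
    intro A _ _ _ P _ _ h _
    have hf : IsField A := isField_iff_maximalIdeal_eq.2 h.max_bot
    let _ := hf.toField
    exact Module.Free.of_divisionRing A P
  | succ n ih =>
    intro A _ _ _ P _ _ h hP
    have := h.isDomain
    obtain ⟨x, hx, hx2, hq⟩ := h.exists_mem
    have := isLocal_quot hx
    have hx0 : x ≠ 0 := by
      rintro rfl
      exact hx2 (zero_mem _)
    have hreg : IsSMulRegular A x := (IsLeftRegular.isSMulRegular (IsRegular.of_ne_zero hx0).left)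
    have := hP.finite
    have := Module.finitePresentation_of_finite A P
    rw [← Module.free_quotSMulTop_iff_free A P (x := x) (maximalIdeal_le_jacobson _ hx)
      (hP.regular hreg)]
    exact ih (h.quot hx hx2) (hP.quot hreg)
end syzreg
section loc
variable {R : Type} [CommRing R]

lemma Syz.loc (S : Submonoid R) {n : ℕ} : ∀ {P : Type} [AddCommGroup P] [Module R P],
    Syz R n P → Syz (Localization S) n (LocalizedModule S P) := by
  induction n with
  | zero =>
    intro P _ _ h
    have := h.finite
    exact Syz.zero _ inferInstance
  | succ n ih =>
    intro P _ _ h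
    cases h with
    | succ _ _ F C f g h1 h2 h3 h4 h5 h6 h7 =>
      exact Syz.succ n _ (LocalizedModule S F) (LocalizedModule S C)
        ((IsLocalizedModule.map S (LocalizedModule.mkLinearMap S P)
          (LocalizedModule.mkLinearMap S F) f).extendScalarsOfIsLocalization S (Localization S))
        ((IsLocalizedModule.map S (LocalizedModule.mkLinearMap S F)
          (LocalizedModule.mkLinearMap S C) g).extendScalarsOfIsLocalization S (Localization S))
        inferInstance
        (Module.free_of_isLocalizedModule S (LocalizedModule.mkLinearMap S F)) inferInstance
        (IsLocalizedModule.map_injective S _ _ f h4)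
        (IsLocalizedModule.map_surjective S _ _ g h5)
        (IsLocalizedModule.map_exact S _ _ _ f g h6) (ih h7)

lemma LF_of_free [IsNoetherianRing R] (p : Ideal R) [hp : p.IsPrime] (P : Type) [AddCommGroup P]
    [Module R P] [Module.Finite R P]
    (hf : Module.Free (Localization p.primeCompl) (LocalizedModule p.primeCompl P)) : LF R p P := by
  let S := p.primeCompl
  let L := Localization S
  have : Nontrivial L := inferInstanceAs (Nontrivial (Localization.AtPrime p))
  let b := Module.finBasis L (LocalizedModule S P)
  let n := Module.finrank L (LocalizedModule S P)
  let e : LocalizedModule S P ≃ₗ[R] (Fin n → L) := b.equivFun.restrictScalars R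
  let c : (Fin n → R) →ₗ[R] (Fin n → L) :=
    LinearMap.pi fun i => Algebra.linearMap R L ∘ₗ LinearMap.proj i
  let ι : P →ₗ[R] LocalizedModule S P := LocalizedModule.mkLinearMap S P
  have := Module.finitePresentation_of_finite R P
  have hc : IsLocalizedModule S c := inferInstance
  obtain ⟨g, s, hg⟩ := Module.FinitePresentation.exists_lift_of_isLocalizedModule S c
    (e.toLinearMap ∘ₗ ι)
  obtain ⟨h, t, hh⟩ := Module.FinitePresentation.exists_lift_of_isLocalizedModule S ι
    (e.symm.toLinearMap ∘ₗ c)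
  obtain ⟨u, hu⟩ := Module.Finite.exists_smul_of_comp_eq_of_isLocalizedModule S ι (h ∘ₗ g)
    (((t : R) * (s : R)) • LinearMap.id) (by
      ext y
      have h1 := LinearMap.congr_fun hh (g y)
      have h2 := LinearMap.congr_fun hg y
      simp only [LinearMap.comp_apply, LinearMap.smul_apply, LinearEquiv.coe_coe,
        Submonoid.smul_def] at h1 h2
      simp only [LinearMap.comp_apply, LinearMap.smul_apply, LinearMap.id_apply]
      rw [h1, h2, map_smul, e.symm_apply_apply, smul_smul, map_smul])
  refine ⟨(u : R) * ((t : R) * (s : R)), (u * (t * s)).2, n, g, (u : R) • h, ?_⟩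
  rw [LinearMap.smul_comp]
  rw [Submonoid.smul_def, Submonoid.smul_def] at hu
  rw [hu, smul_smul]

lemma Reg_of {A : Type} [CommRing A] [IsLocalRing A] {h : ℕ} (hA : IsRegularLocalRing A)
    (hd : ringKrullDim A = h) : Reg h A := by
  obtain ⟨_, _, s, hs, hc⟩ := hA
  rw [hd] at hc
  have hc' : s.card = h := by exact_mod_cast hc
  refine ⟨⟨fun i => (s.equivFin.symm (i.cast hc'.symm) : A), ?_⟩, hd.ge⟩
  rw [← jacobson_eq_maximalIdeal ⊥ bot_ne_top, ← hs]
  congr 1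
  ext a
  constructor
  · rintro ⟨i, rfl⟩
    exact (s.equivFin.symm _).2
  · intro ha
    exact ⟨(s.equivFin ⟨a, ha⟩).cast hc', by simp⟩

lemma LF_of_syz [IsNoetherianRing R] [IsLocalRing R] (hsing : IsolatedSingularity R) (p : Ideal R)
    [hp : p.IsPrime] (hne : p ≠ maximalIdeal R) {n : ℕ} (hn : p.height ≤ n)
    (P : Type) [AddCommGroup P] [Module R P] (hP : Syz R n P) : LF R p P := by
  have h1 := hsing p hp (by rwa [jacobson_eq_maximalIdeal ⊥ bot_ne_top])
  have hl : IsLocalRing (Localization p.primeCompl) :=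
    inferInstanceAs (IsLocalRing (Localization.AtPrime p))
  have hno : IsNoetherianRing (Localization p.primeCompl) := h1.1
  have hd := IsLocalization.AtPrime.ringKrullDim_eq_height p (Localization p.primeCompl)
  obtain ⟨h, hh⟩ := ENat.ne_top_iff_exists.1 (ne_top_of_le_ne_top (ENat.natCast_ne_top n) hn)
  rw [← hh] at hd hn
  have hr : Reg h (Localization p.primeCompl) := Reg_of h1 hd
  have := hP.finite
  exact LF_of_free p P (hr.free ((hP.mono (by exact_mod_cast hn)).loc p.primeCompl))
end loc
section main
variable (R : Type) [CommRing R] [IsNoetherianRing R] [IsLocalRing R]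

/-- `P` is an `n`-th syzygy of the residue field. -/
inductive IsOm : ℕ → (P : Type) → [AddCommGroup P] → [Module R P] → Prop
  | zero (P : Type) [AddCommGroup P] [Module R P] (e : P ≃ₗ[R] (R ⧸ maximalIdeal R)) : IsOm 0 P
  | succ (n m : ℕ) (P C : Type) [AddCommGroup P] [Module R P] [AddCommGroup C] [Module R C]
    (f : P →ₗ[R] (Fin m → R)) (g : (Fin m → R) →ₗ[R] C) :
      Function.Injective f → Function.Surjective g → Function.Exact f g → IsOm n C → IsOm (n+1) P

variable {R}

lemma IsOm.finite {n : ℕ} {P : Type} [AddCommGroup P] [Module R P] (h : IsOm R n P) :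
    Module.Finite R P := by
  cases h with
  | zero _ e => exact Module.Finite.equiv e.symm
  | succ n m _ C f g h1 h2 h3 h4 => exact Module.Finite.of_injective f h1

lemma IsOm.exists (n : ℕ) : ∃ P : ModuleCat.{0} R, IsOm R n P := by
  induction n with
  | zero => exact ⟨ModuleCat.of R (R ⧸ maximalIdeal R), IsOm.zero _ (LinearEquiv.refl _ _)⟩
  | succ n ih =>
    obtain ⟨C, hC⟩ := ih
    have := hC.finite
    obtain ⟨m, π, hπ⟩ := Module.Finite.exists_fin' R C
    exact ⟨ModuleCat.of R (LinearMap.ker π), IsOm.succ n m _ C (LinearMap.ker π).subtype π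
      (Submodule.injective_subtype _) hπ (LinearMap.exact_subtype_ker_map π) hC⟩

lemma IsOm.depth {d : ℕ} (hd : Dp R d R) {n : ℕ} : ∀ {P : Type} [AddCommGroup P] [Module R P],
    n ≤ d → IsOm R n P → Dp R n P := by
  induction n with
  | zero => intro P _ _ _ _ i hi; omega
  | succ n ih =>
    intro P _ _ hn h
    cases h with
    | succ _ m _ C f g h1 h2 h3 h4 =>
      exact Dp.left f g h1 h2 h3 (Dp.free (hd.mono hn) m) (ih (by omega) h4)

lemma inj_step (hsing : IsolatedSingularity R) {d i j : ℕ} (hdim : (maximalIdeal R).height = d)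
    (hij : i + (j + 1) = d) {M N : Type} [AddCommGroup M] [Module R M] [AddCommGroup N] [Module R N]
    [Module.Finite R N] (hN : Dp R (j+1) N) (hLF : ∀ p : Ideal R, LF R p M → LF R p N)
    (hS : Syz R i M) {n : ℕ} {φ : N →ₗ[R] (Fin n → R)} (hφ : LA φ) : Function.Injective φ := by
  rw [← LinearMap.ker_eq_bot]
  by_contra hne
  have : Nontrivial (LinearMap.ker φ) := Submodule.nontrivial_iff_ne_bot.2 hne
  obtain ⟨p, hp⟩ := associatedPrimes.nonempty R (LinearMap.ker φ)
  have hp : IsAssociatedPrime p (LinearMap.ker φ) := hp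
  have hpp : p.IsPrime := hp.1
  have hpN : IsAssociatedPrime p N := hp.map_of_injective _ (Submodule.injective_subtype _)
  have hh := hN.ass_height hpN
  rw [hdim, ← hij] at hh
  have hle : p.height ≤ i := by
    have : p.height + ((j + 1 : ℕ) : ℕ∞) ≤ (i : ℕ∞) + ((j + 1 : ℕ) : ℕ∞) := by exact_mod_cast hh
    exact (ENat.add_le_add_iff_right (ENat.natCast_ne_top _)).1 this
  have hpm : p ≠ maximalIdeal R := by
    rintro rfl
    rw [hdim] at hle
    have : d ≤ i := by exact_mod_cast hle
    omega
  obtain ⟨s, hs, m, g, h, hgh⟩ := hLF p (LF_of_syz hsing p hpm hle M hS)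
  obtain ⟨g', rfl⟩ := hφ m g
  obtain ⟨_, y, hy⟩ := isAssociatedPrime_iff.1 hp
  apply hs
  rw [hy, Submodule.mem_colon_singleton, Submodule.mem_bot]
  have h1 := LinearMap.congr_fun hgh (y : N)
  have hy0 : φ (y : N) = 0 := y.2
  simp only [LinearMap.comp_apply, hy0, map_zero, LinearMap.smul_apply, LinearMap.id_apply] at h1
  exact Subtype.ext h1.symm

lemma chain (hsing : IsolatedSingularity R) {d : ℕ} (hdim : (maximalIdeal R).height = d)
    (hR : Dp R d R) {M : Type} [AddCommGroup M] [Module R M] (j : ℕ) :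
    ∀ (i : ℕ) (N X : Type) [AddCommGroup N] [Module R N] [AddCommGroup X] [Module R X],
      i + j = d → Module.Finite R N → Dp R j N → IsOm R j X → SZ R N X →
      (∀ p : Ideal R, LF R p M → LF R p N) → (∀ n, Syz R n N → Syz R (n+i) M) →
      (Module.Projective R N → Module.Projective R M) → Module.Projective R M := by
  induction j with
  | zero =>
    intro i N X _ _ _ _ hij hfin hD hX hSZ hLF hS hpr
    cases hX with
    | zero _ e =>
      refine hpr (base fun f => ?_)
      obtain ⟨n, g, h, hf⟩ := hSZ (e.symm.toLinearMap ∘ₗ f)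
      refine ⟨n, g, e.toLinearMap ∘ₗ h, ?_⟩
      rw [LinearMap.comp_assoc, ← hf, ← LinearMap.comp_assoc]
      ext y
      simp
  | succ j ih =>
    intro i N X _ _ _ _ hij hfin hD hX hSZ hLF hS hpr
    cases hX with
    | succ _ m _ C ι π h1 h2 h3 h4 =>
      obtain ⟨n, φ, hφ⟩ := exists_LA (R := R) (N := N)
      have hS0 : Syz R i M := by simpa using hS 0 (Syz.zero N hfin)
      have hinj := inj_step hsing hdim hij hD hLF hS0 hφ
      let ψ := (LinearMap.range φ).mkQ
      have hψ : Function.Surjective ψ := Submodule.mkQ_surjective _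
      have he : Function.Exact φ ψ := LinearMap.exact_map_mkQ_range φ
      refine ih (i+1) ((Fin n → R) ⧸ LinearMap.range φ) C (by omega) inferInstance
        (Dp.right φ ψ hinj hψ he hD (Dp.free (hR.mono (by omega)) n)) h4
        (SZ.step hφ hψ he h1 h2 h3 hSZ) (fun p hp => (hLF p hp).step hφ hψ he) ?_
        (fun hp => hpr (proj_step hinj hψ he hp))
      intro l hl
      have := hS (l+1) (Syz.succ l N (Fin n → R) _ φ ψ hfin inferInstance inferInstance hinj hψ he hl)
      rwa [add_assoc, add_comm 1 i] at this

end main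

/-- Lemma 2.1. Let `(R, m, k)` be a Cohen-Macaulay local ring with an
isolated singularity. Then there exists a Cohen-Macaulay `R`-module `X` such that
`stHom_R(M, X) ≠ 0` for every non-free Cohen-Macaulay `R`-module `M`. -/
theorem exists_CM_module_with_nonzero_stHom_from_all_nonfree
    (R : Type) [CommRing R] [IsNoetherianRing R] [IsLocalRing R]
    (hCM : IsMCM R R) (hsing : IsolatedSingularity R) :
    ∃ X : ModuleCat.{0} R, IsMCM R X ∧
      ∀ (M : Type) [AddCommGroup M] [Module R M], IsMCM R M → ¬ Module.Free R M →
        Nontrivial (StHom R M (X : Type)) := by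
  have hjac : (⊥ : Ideal R).jacobson = maximalIdeal R := jacobson_eq_maximalIdeal ⊥ bot_ne_top
  obtain ⟨_, hR⟩ := hCM
  obtain ⟨rs, hm, hreg, hlen⟩ := hR.resolve_left (not_subsingleton R)
  rw [hjac] at hm
  have hDR : Dp R rs.length R := Dp.of_regular rs hm hreg
  have hdim : (maximalIdeal R).height = (rs.length : ℕ∞) := by
    have := hlen.trans maximalIdeal_height_eq_ringKrullDim.symm
    exact_mod_cast this.symm
  obtain ⟨X, hX⟩ := IsOm.exists (R := R) rs.length
  have hXf := hX.finite
  refine ⟨X, ⟨hXf, ?_⟩, ?_⟩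
  · rcases subsingleton_or_nontrivial X with h | h
    · exact Or.inl h
    · obtain ⟨ts, h1, h2, h3⟩ := (hX.depth hDR le_rfl).exists_regular
      exact Or.inr ⟨ts, by rwa [hjac], h3, by rw [h1, hlen]⟩
  · intro M _ _ hM hfree
    by_contra hcon
    rw [not_nontrivial_iff_subsingleton] at hcon
    have htop : stSub R M X = ⊤ := Submodule.Quotient.subsingleton_iff.1 hcon
    obtain ⟨hMf, hM⟩ := hM
    apply hfree
    have hDM : Dp R rs.length M := by
      rcases hM with h | ⟨ts, h1, h2, h3⟩
      · exact Dp.of_subsingleton _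
      · rw [hjac] at h1
        have hl : ts.length = rs.length := by
          have := h3.trans hlen.symm
          exact_mod_cast this
        rw [← hl]
        exact Dp.of_regular ts h1 h2
    have hp : Module.Projective R M := chain hsing hdim hDR rs.length 0 M X (by omega) hMf hDM hX
      (SZ_of_top htop) (fun _ h => h) (fun _ h => h) (fun h => h)
    exact Module.free_of_flat_of_isLocalRing

end Paper
end

section
/- Let R be a Noetherian local ring, let 0 → A → B → C → 0 be a short exact sequence of finitely generated R-modules, and let U be a finitely generated R-module. Then there exists an exact sequence of R-modules stHom_R(U, ΩA) → stHom_R(U, ΩB) → stHom_R(U, ΩC) → stHom_R(U, A) → stHom_R(U, B) → stHom_R(U, C), where the last two maps are induced by the given maps A → B and B → C. -/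
/-!
Common definitions: Cohen-Macaulay modules, isolated singularities, stable Hom,
syzygies, transposes, Auslander-Reiten sequences, and the Grothendieck-type groups
`G(CM(R))`, `Ex(CM(R))`, `AR(CM(R))` from the paper
"Syzygies of Cohen-Macaulay modules and Grothendieck groups".

Throughout, the maximal ideal of a local ring is realized as the Jacobson radical
`(⊥ : Ideal R).jacobson` (for a local ring these coincide), which lets the definitions
make sense without a `IsLocalRing` instance argument.
-/

namespace Paper

section Helpers

variable {R : Type} [CommRing R]

theorem aux_mem_of {M N : Type} [AddCommGroup M] [Module R M] [AddCommGroup N] [Module R N]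
    {n : ℕ} (g : M →ₗ[R] (Fin n → R)) (h : (Fin n → R) →ₗ[R] N) : h ∘ₗ g ∈ stSub R M N :=
  Submodule.subset_span ⟨n, g, h, rfl⟩

theorem aux_lift {n : ℕ} {X Y : Type} [AddCommGroup X] [Module R X] [AddCommGroup Y]
    [Module R Y] (p : X →ₗ[R] Y) (hp : Function.Surjective p) (h : (Fin n → R) →ₗ[R] Y) :
    ∃ l : (Fin n → R) →ₗ[R] X, ∀ x, p (l x) = h x := by
  obtain ⟨l, hl⟩ := Module.projective_lifting_property p h hp
  exact ⟨l, fun x => LinearMap.congr_fun hl x⟩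

theorem aux_factor {M N : Type} [AddCommGroup M] [Module R M] [AddCommGroup N] [Module R N]
    {k : ℕ} (p : (Fin k → R) →ₗ[R] N) (hp : Function.Surjective p) (φ : M →ₗ[R] N)
    (hφ : φ ∈ stSub R M N) : ∃ ψ : M →ₗ[R] (Fin k → R), ∀ x, φ x = p (ψ x) := by
  unfold stSub at hφ
  induction hφ using Submodule.span_induction with
  | mem x hx =>
    obtain ⟨n, g, h, rfl⟩ := hx
    obtain ⟨l, hl⟩ := aux_lift p hp h
    exact ⟨l ∘ₗ g, fun x => by simp [hl]⟩
  | zero => exact ⟨0, fun x => by simp⟩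
  | add a b _ _ ha hb =>
    obtain ⟨a', ha⟩ := ha
    obtain ⟨b', hb⟩ := hb
    exact ⟨a' + b', fun x => by simp [ha, hb]⟩
  | smul r a _ ha =>
    obtain ⟨a', ha⟩ := ha
    exact ⟨r • a', fun x => by simp [ha]⟩

theorem aux_ker {X Y Z : Type} [AddCommGroup X] [Module R X] [AddCommGroup Y]
    [Module R Y] [AddCommGroup Z] [Module R Z] (p : Y →ₗ[R] Z) (h : X →ₗ[R] Y)
    (hp : ∀ x, p (h x) = 0) :
    ∃ l : X →ₗ[R] LinearMap.ker p, ∀ x, (l x : Y) = h x :=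
  ⟨h.codRestrict _ hp, fun _ => rfl⟩

theorem aux_exact_lift {A B C X : Type} [AddCommGroup A] [Module R A] [AddCommGroup B]
    [Module R B] [AddCommGroup C] [Module R C] [AddCommGroup X] [Module R X]
    (f : A →ₗ[R] B) (g : B →ₗ[R] C) (hf : Function.Injective f)
    (hfg : Function.Exact f g) (h : X →ₗ[R] B) (hh : ∀ x, g (h x) = 0) :
    ∃ l : X →ₗ[R] A, ∀ x, f (l x) = h x := by
  have hr : ∀ x, h x ∈ LinearMap.range f := fun x => (hfg (h x)).1 (hh x)
  refine ⟨(LinearEquiv.ofInjective f hf).symm.toLinearMap ∘ₗ h.codRestrict _ hr, fun x => ?_⟩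
  have := (LinearEquiv.ofInjective f hf).apply_symm_apply (h.codRestrict _ hr x)
  exact congrArg Subtype.val this

theorem aux_exact {U N N' N'' : Type} [AddCommGroup U] [Module R U]
    [AddCommGroup N] [Module R N] [AddCommGroup N'] [Module R N']
    [AddCommGroup N''] [Module R N''] (φ : N →ₗ[R] N') (ψ : N' →ₗ[R] N'')
    (h0 : ∀ α : U →ₗ[R] N, ψ ∘ₗ φ ∘ₗ α ∈ stSub R U N'')
    (h1 : ∀ β : U →ₗ[R] N', ψ ∘ₗ β ∈ stSub R U N'' →
      ∃ α : U →ₗ[R] N, φ ∘ₗ α - β ∈ stSub R U N') :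
    Function.Exact (stMapLeft R (M := U) φ) (stMapLeft R (M := U) ψ) := by
  intro y
  obtain ⟨β, rfl⟩ := Submodule.Quotient.mk_surjective _ y
  constructor
  · intro h
    obtain ⟨α, hα⟩ := h1 β ((Submodule.Quotient.mk_eq_zero _).1 h)
    exact ⟨Submodule.Quotient.mk α, (Submodule.Quotient.eq _).2 hα⟩
  · rintro ⟨x, hx⟩
    obtain ⟨α, rfl⟩ := Submodule.Quotient.mk_surjective _ x
    rw [← hx]
    exact (Submodule.Quotient.mk_eq_zero _).2 (h0 α)

end Helpers

/-- Lemma 2.2. Given a short exact sequence `0 → A → B → C → 0` of finitely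
generated modules over a Noetherian local ring and a finitely generated module `U`, there is an
exact sequence
`stHom(U,ΩA) → stHom(U,ΩB) → stHom(U,ΩC) → stHom(U,A) → stHom(U,B) → stHom(U,C)`,
the last two maps being induced by `f : A → B` and `g : B → C`. -/
theorem exact_stHom_syzygy_sequence
    (R : Type) [CommRing R] [IsNoetherianRing R] [IsLocalRing R]
    (A B C U : Type) [AddCommGroup A] [Module R A] [AddCommGroup B] [Module R B]
    [AddCommGroup C] [Module R C] [AddCommGroup U] [Module R U]
    (hA : Module.Finite R A) (hB : Module.Finite R B) (hC : Module.Finite R C)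
    (hU : Module.Finite R U)
    (f : A →ₗ[R] B) (g : B →ₗ[R] C) (hf : Function.Injective f)
    (hg : Function.Surjective g) (hfg : Function.Exact f g)
    (DA : SyzData R A) (DB : SyzData R B) (DC : SyzData R C) :
    ∃ (d₁ : StHom R U (SyzOf R DA) →ₗ[R] StHom R U (SyzOf R DB))
      (d₂ : StHom R U (SyzOf R DB) →ₗ[R] StHom R U (SyzOf R DC))
      (d₃ : StHom R U (SyzOf R DC) →ₗ[R] StHom R U A),
      Function.Exact d₁ d₂ ∧ Function.Exact d₂ d₃ ∧
      Function.Exact d₃ (stMapLeft R (M := U) f) ∧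
      Function.Exact (stMapLeft R (M := U) f) (stMapLeft R (M := U) g) := by
  obtain ⟨hF, hhF⟩ := aux_lift DB.p DB.surj (f ∘ₗ DA.p)
  obtain ⟨hG, hhG⟩ := aux_lift DC.p DC.surj (g ∘ₗ DB.p)
  obtain ⟨s, hs⟩ := aux_lift g hg DC.p
  obtain ⟨σ, hσ⟩ := aux_lift DB.p DB.surj s
  simp only [LinearMap.comp_apply] at hhF hhG
  have gf : ∀ a, g (f a) = 0 := fun a => (hfg (f a)).2 ⟨a, rfl⟩
  have kA : ∀ x : SyzOf R DA, DA.p x = 0 := fun x => x.2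
  have kB : ∀ x : SyzOf R DB, DB.p x = 0 := fun x => x.2
  have kC : ∀ x : SyzOf R DC, DC.p x = 0 := fun x => x.2
  obtain ⟨t, ht⟩ := aux_exact_lift f g hf hfg (DB.p - s ∘ₗ hG)
    (fun x => by simp [hs, hhG])
  obtain ⟨τ, hτ⟩ := aux_lift DA.p DA.surj t
  obtain ⟨δ, hδ⟩ := aux_exact_lift f g hf hfg (s ∘ₗ (LinearMap.ker DC.p).subtype)
    (fun x => by simp [hs])
  obtain ⟨wF, hwF⟩ := aux_ker DB.p (hF ∘ₗ (LinearMap.ker DA.p).subtype)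
    (fun x => by simp [hhF])
  obtain ⟨wG, hwG⟩ := aux_ker DC.p (hG ∘ₗ (LinearMap.ker DB.p).subtype)
    (fun x => by simp [hhG])
  obtain ⟨ρ, hρ⟩ := aux_ker DC.p (hG ∘ₗ hF) (fun x => by simp [hhG, hhF, gf])
  obtain ⟨ε, hε⟩ := aux_ker DC.p (hG ∘ₗ σ - LinearMap.id) (fun x => by simp [hhG, hσ, hs])
  obtain ⟨ω, hω⟩ := aux_ker DB.p (hF ∘ₗ τ - LinearMap.id + σ ∘ₗ hG)
    (fun x => by simp [hhF, hτ, hσ, ht])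
  simp only [LinearMap.comp_apply, LinearMap.sub_apply, LinearMap.add_apply, LinearMap.id_apply,
    Submodule.subtype_apply] at ht hδ hwF hwG hρ hε hω
  refine ⟨stMapLeft R wF, stMapLeft R wG, stMapLeft R δ, aux_exact _ _ ?_ ?_,
    aux_exact _ _ ?_ ?_, aux_exact _ _ ?_ ?_, aux_exact _ _ ?_ ?_⟩
  · intro α
    have : wG ∘ₗ wF ∘ₗ α = ρ ∘ₗ ((LinearMap.ker DA.p).subtype ∘ₗ α) := by
      ext1 u
      apply Subtype.ext
      simp [hwG, hwF, hρ]
    rw [this]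
    exact aux_mem_of _ _
  · intro β hβ
    obtain ⟨k, μ, hμ⟩ := Module.Finite.exists_fin' R (SyzOf R DC)
    obtain ⟨κ, hκ⟩ := aux_factor μ hμ _ hβ
    obtain ⟨l, hl⟩ := aux_lift DA.p DA.surj (δ ∘ₗ μ)
    simp only [LinearMap.comp_apply] at hl hκ
    obtain ⟨α, hα⟩ := aux_ker DA.p (τ ∘ₗ (LinearMap.ker DB.p).subtype ∘ₗ β + l ∘ₗ κ) (by
      intro x
      apply hf
      simp [hτ, hl, ht, hδ, ← hκ, hwG])
    obtain ⟨ν, hν⟩ := aux_ker DB.p (hF ∘ₗ l - σ ∘ₗ (LinearMap.ker DC.p).subtype ∘ₗ μ) (by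
      intro x
      simp [hhF, hl, hδ, hσ])
    refine ⟨α, ?_⟩
    have : wF ∘ₗ α - β = ω ∘ₗ ((LinearMap.ker DB.p).subtype ∘ₗ β) + ν ∘ₗ κ := by
      ext1 u
      apply Subtype.ext
      simp [hwF, hα, hω, hν, ← hκ, hwG]
      abel
    rw [this]
    exact add_mem (aux_mem_of _ _) (aux_mem_of _ _)
  · intro β
    have : δ ∘ₗ wG ∘ₗ β = (-t) ∘ₗ ((LinearMap.ker DB.p).subtype ∘ₗ β) := by
      ext1 u
      apply hf
      simp [hδ, hwG, ht]
    rw [this]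
    exact aux_mem_of _ _
  · intro γ hγ
    obtain ⟨α, hα⟩ := aux_factor DA.p DA.surj _ hγ
    simp only [LinearMap.comp_apply] at hα
    obtain ⟨β, hβ⟩ := aux_ker DB.p (σ ∘ₗ (LinearMap.ker DC.p).subtype ∘ₗ γ - hF ∘ₗ α) (by
      intro x
      simp [hhF, ← hα, hδ, hσ])
    refine ⟨β, ?_⟩
    have : wG ∘ₗ β - γ = ε ∘ₗ ((LinearMap.ker DC.p).subtype ∘ₗ γ) + (-ρ) ∘ₗ α := by
      ext1 u
      apply Subtype.ext
      simp [hwG, hβ, hε, hρ]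
      abel
    rw [this]
    exact add_mem (aux_mem_of _ _) (aux_mem_of _ _)
  · intro γ
    have : f ∘ₗ δ ∘ₗ γ = s ∘ₗ ((LinearMap.ker DC.p).subtype ∘ₗ γ) := by
      ext1 u
      simp [hδ]
    rw [this]
    exact aux_mem_of _ _
  · intro a ha
    obtain ⟨β, hβ⟩ := aux_factor DB.p DB.surj _ ha
    simp only [LinearMap.comp_apply] at hβ
    obtain ⟨γ, hγ⟩ := aux_ker DC.p (hG ∘ₗ β) (by
      intro x
      simp [hhG, ← hβ, gf])
    refine ⟨γ, ?_⟩
    have : δ ∘ₗ γ - a = (-t) ∘ₗ β := by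
      ext1 u
      apply hf
      simp [hδ, hγ, ht, hβ]
    rw [this]
    exact aux_mem_of _ _
  · intro a
    have : g ∘ₗ f ∘ₗ a = 0 := by
      ext1 u
      simp [gf]
    rw [this]
    exact zero_mem _
  · intro φ hφ
    obtain ⟨ψ, hψ⟩ := aux_factor DC.p DC.surj _ hφ
    simp only [LinearMap.comp_apply] at hψ
    obtain ⟨a, ha⟩ := aux_exact_lift f g hf hfg (φ - s ∘ₗ ψ) (by
      intro x
      simp [hs, hψ])
    refine ⟨a, ?_⟩
    have : f ∘ₗ a - φ = (-s) ∘ₗ ψ := by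
      ext1 u
      simp [ha]
    rw [this]
    exact aux_mem_of _ _

end Paper
end
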